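/- There exists a map ϱ* from the disjoint union of the groups UVB_n (n ≥ 2) to the disjoint union of the groups UVP_m (m ≥ 1, with UVP_1 the trivial group) such that: (i) for every α ∈ UVB_n, ϱ*(α) ∈ UVP_m where m is the number of orbits of ι(α) on {1,…,n}, and α is fused Markov equivalent to ϱ*(α); (ii) for all unrestricted virtual braids α and β, α and β are fused Markov equivalent if and only if ϱ*(α) and ϱ*(β) lie in the same group UVP_m and there exists π ∈ S_m with s(π) ϱ*(α) s(π)^{−1} ϱ*(β)^{−1} ∈ [UVP_m, UVP_m]. -/

import Mathlib

/-!  Common setup: the unrestricted virtual braid group `UVB n`, its generators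
σ_k, ρ_k (1-based indices), the elements λ_{i,j} and B_{i,j}, the permutation
homomorphism ι (characterized by `IsIota`), the section s : S_n → UVB n
(characterized by `IsPermSection`), and fused Markov equivalence. -/

/-- Generators of the unrestricted virtual braid group `UVB n`:
`Sum.inl i` is the classical generator σ_{i+1} and `Sum.inr i` is the virtual
generator ρ_{i+1}, for `i : Fin (n-1)` (so the 1-based indices are `1, …, n-1`). -/
abbrev UVBGen (n : ℕ) := Sum (Fin (n - 1)) (Fin (n - 1))

namespace UVBGen
def sg {n : ℕ} (i : Fin (n - 1)) : FreeGroup (UVBGen n) := FreeGroup.of (Sum.inl i)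
def rg {n : ℕ} (i : Fin (n - 1)) : FreeGroup (UVBGen n) := FreeGroup.of (Sum.inr i)
end UVBGen

open UVBGen in
/-- The defining relations of the unrestricted virtual braid group. -/
def uvbRels (n : ℕ) : Set (FreeGroup (UVBGen n)) :=
  {r | (∃ i j : Fin (n - 1), (j : ℕ) = (i : ℕ) + 1 ∧
          (r = sg i * sg j * sg i * (sg j * sg i * sg j)⁻¹ ∨
           r = rg i * rg j * rg i * (rg j * rg i * rg j)⁻¹ ∨
           r = rg i * rg j * sg i * (sg j * rg i * rg j)⁻¹ ∨
           r = rg i * sg j * sg i * (sg j * sg i * rg j)⁻¹ ∨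
           r = rg j * sg i * sg j * (sg i * sg j * rg i)⁻¹)) ∨
       (∃ i j : Fin (n - 1), ((i : ℕ) + 2 ≤ (j : ℕ) ∨ (j : ℕ) + 2 ≤ (i : ℕ)) ∧
          (r = sg i * sg j * (sg j * sg i)⁻¹ ∨
           r = rg i * rg j * (rg j * rg i)⁻¹ ∨
           r = sg i * rg j * (rg j * sg i)⁻¹)) ∨
       (∃ i : Fin (n - 1), r = rg i * rg i)}

/-- The unrestricted virtual braid group on `n` strands. -/
abbrev UVB (n : ℕ) := PresentedGroup (uvbRels n)

namespace UVB

/-- The generator σ_k (1-based index; meaningful for `1 ≤ k ≤ n-1`, junk value `1` otherwise). -/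
def sigma (n k : ℕ) : UVB n :=
  if h : 1 ≤ k ∧ k ≤ n - 1 then PresentedGroup.of (Sum.inl ⟨k - 1, by omega⟩) else 1

/-- The generator ρ_k (1-based index; meaningful for `1 ≤ k ≤ n-1`, junk value `1` otherwise). -/
def rho (n k : ℕ) : UVB n :=
  if h : 1 ≤ k ∧ k ≤ n - 1 then PresentedGroup.of (Sum.inr ⟨k - 1, by omega⟩) else 1

/-- The element λ_{i,j} of `UVB n` (1-based indices `1 ≤ i ≠ j ≤ n`; junk value `1` if `i = j`).
For `i < j`:  `λ_{i,j} = ρ_{j-1}⋯ρ_{i+1} · ρ_i σ_i⁻¹ · ρ_{i+1}⋯ρ_{j-1}` and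
`λ_{j,i} = ρ_{j-1}⋯ρ_{i+1} · σ_i⁻¹ ρ_i · ρ_{i+1}⋯ρ_{j-1}`. -/
def lam (n i j : ℕ) : UVB n :=
  if i < j then
    (((List.range' (i + 1) (j - 1 - i)).reverse.map (rho n)).prod) *
      (rho n i * (sigma n i)⁻¹) *
      (((List.range' (i + 1) (j - 1 - i)).map (rho n)).prod)
  else if j < i then
    (((List.range' (j + 1) (i - 1 - j)).reverse.map (rho n)).prod) *
      ((sigma n j)⁻¹ * rho n j) *
      (((List.range' (j + 1) (i - 1 - j)).map (rho n)).prod)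
  else 1

/-- The element `B_{i,j} = ρ_{j-1}ρ_{j-2}⋯ρ_{i+1}ρ_i` for `i < j`, and `1` otherwise. -/
def B (n i j : ℕ) : UVB n :=
  if i < j then ((List.range' i (j - i)).reverse.map (rho n)).prod else 1

/-- The subgroup `U_j` of `UVB n` generated by `{λ_{i,j}, λ_{j,i} : 1 ≤ i < j}`. -/
def U (n j : ℕ) : Subgroup (UVB n) :=
  Subgroup.closure {x | ∃ i, 1 ≤ i ∧ i < j ∧ (x = lam n i j ∨ x = lam n j i)}

end UVB

/-- `ι : UVB n →* S_n` is the homomorphism sending σ_k and ρ_k to the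
transposition (k, k+1) (written 0-based on `Fin n`). -/
def IsIota (n : ℕ) (ι : UVB n →* Equiv.Perm (Fin n)) : Prop :=
  ∀ (k : ℕ) (h1 : 1 ≤ k) (h2 : k ≤ n - 1),
    ι (UVB.sigma n k) = Equiv.swap ⟨k - 1, by omega⟩ ⟨k, by omega⟩ ∧
    ι (UVB.rho n k) = Equiv.swap ⟨k - 1, by omega⟩ ⟨k, by omega⟩

/-- `s : S_n →* UVB n` is the homomorphism sending the transposition (k, k+1) to ρ_k. -/
def IsPermSection (n : ℕ) (s : Equiv.Perm (Fin n) →* UVB n) : Prop :=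
  ∀ (k : ℕ) (h1 : 1 ≤ k) (h2 : k ≤ n - 1),
    s (Equiv.swap ⟨k - 1, by omega⟩ ⟨k, by omega⟩) = UVB.rho n k

/-- The number of orbits of a permutation of `Fin n`
(= number of fixed points + number of nontrivial cycles). -/
def numOrbits {n : ℕ} (π : Equiv.Perm (Fin n)) : ℕ :=
  (Finset.univ.filter fun x => π x = x).card + π.cycleType.card

namespace UVB

private def embedGen (n : ℕ) : UVBGen n → UVBGen (n + 1)
  | Sum.inl i => Sum.inl ⟨i.val, by have := i.isLt; omega⟩
  | Sum.inr i => Sum.inr ⟨i.val, by have := i.isLt; omega⟩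

open UVBGen in
/-- The natural inclusion `UVB n →* UVB (n+1)` (σ_k ↦ σ_k, ρ_k ↦ ρ_k). -/
def incl (n : ℕ) : UVB n →* UVB (n + 1) :=
  PresentedGroup.toGroup (f := fun x => PresentedGroup.of (embedGen n x)) (by
    have key : (FreeGroup.lift fun x => (PresentedGroup.of (embedGen n x) : UVB (n + 1)))
        = (PresentedGroup.mk (uvbRels (n + 1))).comp (FreeGroup.map (embedGen n)) := by
      ext x
      simp [PresentedGroup.of]
    intro r hr
    rw [key]
    simp only [MonoidHom.comp_apply]
    have hmem : FreeGroup.map (embedGen n) r ∈ uvbRels (n + 1) := by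
      have hsg : ∀ i : Fin (n - 1), FreeGroup.map (embedGen n) (sg i)
          = sg (⟨i.val, by have := i.isLt; omega⟩ : Fin (n + 1 - 1)) := by
        intro i; simp [sg, embedGen]
      have hrg : ∀ i : Fin (n - 1), FreeGroup.map (embedGen n) (rg i)
          = rg (⟨i.val, by have := i.isLt; omega⟩ : Fin (n + 1 - 1)) := by
        intro i; simp [rg, embedGen]
      rcases hr with ⟨i, j, hij, hc⟩ | ⟨i, j, hij, hc⟩ | ⟨i, hc⟩
      · refine Or.inl ⟨⟨i.val, by have := i.isLt; omega⟩, ⟨j.val, by have := j.isLt; omega⟩,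
          by simpa using hij, ?_⟩
        rcases hc with h | h | h | h | h <;> subst h <;>
          simp only [map_mul, map_inv, hsg, hrg] <;> tauto
      · refine Or.inr (Or.inl ⟨⟨i.val, by have := i.isLt; omega⟩, ⟨j.val, by have := j.isLt; omega⟩,
          by simpa using hij, ?_⟩)
        rcases hc with h | h | h <;> subst h <;>
          simp only [map_mul, map_inv, hsg, hrg] <;> tauto
      · refine Or.inr (Or.inr ⟨⟨i.val, by have := i.isLt; omega⟩, ?_⟩)
        subst hc
        simp only [map_mul, hsg, hrg]
    exact (QuotientGroup.eq_one_iff _).mpr (Subgroup.subset_normalClosure hmem))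

end UVB

/-- The elementary fused Markov moves on the disjoint union of the groups `UVB n`:
conjugation, and the three right stabilizations (positive, negative, virtual). -/
inductive MarkovBase : (Σ n, UVB n) → (Σ n, UVB n) → Prop
  | conj (n : ℕ) (α γ : UVB n) : MarkovBase ⟨n, α⟩ ⟨n, γ * α * γ⁻¹⟩
  | stabPos (n : ℕ) (α : UVB n) :
      MarkovBase ⟨n, α⟩ ⟨n + 1, UVB.incl n α * UVB.sigma (n + 1) n⟩
  | stabNeg (n : ℕ) (α : UVB n) :
      MarkovBase ⟨n, α⟩ ⟨n + 1, UVB.incl n α * (UVB.sigma (n + 1) n)⁻¹⟩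
  | stabVirt (n : ℕ) (α : UVB n) :
      MarkovBase ⟨n, α⟩ ⟨n + 1, UVB.incl n α * UVB.rho (n + 1) n⟩

/-- Fused Markov equivalence: the smallest equivalence relation generated by the
elementary Markov moves.  By Kamada's theorem, two unrestricted virtual braids are
fused Markov equivalent iff their closures are equivalent fused links. -/
def Markov : (Σ n, UVB n) → (Σ n, UVB n) → Prop := Relation.EqvGen MarkovBase

/-! ## Statement 11 -/

/-!
Send `σ_k` and `ρ_k` to the same transposition and record the crossings in a matrix: this gives a
homomorphism from `UVB_n` to the extension of `ℤ^{n×n}` by `S_n`, and hence integers `lk x i j`,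
the exponent sums of the pure generators `λ_{i,j}`. Two generators `λ_{i,j}` and `λ_{k,l}` commute
unless `{i, j} = {k, l}`. The remaining commutators `[λ_{i,j}, λ_{j,i}]` are invisible to Markov
equivalence: after virtual kinks have been put on both strands, conjugation carries `λ_{i,j}` to a
pair of strands where it can be moved past the rest of the braid. So pure braids that agree modulo
commutators are Markov equivalent.

In a braid that is not pure we may assume that the last strand is moved. Up to commutators its pure
part can be carried along the strands, hence off the last one; a generator for which this is
impossible joins two strands that the braid interchanges, and it can be deleted. The last strand is
then removed by a virtual destabilization. Repeating this, every braid is Markov equivalent to a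
pure one.

Conversely the linking numbers between the components of the closure, up to relabelling of the
components, are invariant under Markov moves. The closure of a pure braid has one component for
each strand, so these numbers determine its class in the abelianization of the pure group up to the
action of the symmetric group.
-/

namespace UVB

open Equiv
open scoped commutatorElement

variable {n : ℕ}

/-- The classical generator `σ_{i+1}` of `UVB_{n+1}`, indexed from zero by `Fin n`. -/
def σ (i : Fin n) : UVB (n + 1) := PresentedGroup.of (Sum.inl i)

/-- The virtual generator `ρ_{i+1}` of `UVB_{n+1}`, indexed from zero by `Fin n`. -/
def ρ (i : Fin n) : UVB (n + 1) := PresentedGroup.of (Sum.inr i)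

theorem sigma_succ {k : ℕ} (hk : k < n) : sigma (n + 1) (k + 1) = σ ⟨k, hk⟩ :=
  dif_pos ⟨by lia, by lia⟩

theorem rho_succ {k : ℕ} (hk : k < n) : rho (n + 1) (k + 1) = ρ ⟨k, hk⟩ :=
  dif_pos ⟨by lia, by lia⟩

theorem sigma_succ_self (n : ℕ) : sigma (n + 2) (n + 1) = σ (Fin.last n) :=
  sigma_succ n.lt_succ_self

theorem rho_succ_self (n : ℕ) : rho (n + 2) (n + 1) = ρ (Fin.last n) :=
  rho_succ n.lt_succ_self

section Relations

theorem σ_braid (i : Fin n) :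
    σ i.castSucc * σ i.succ * σ i.castSucc = σ i.succ * σ i.castSucc * σ i.succ :=
  PresentedGroup.mk_eq_mk_of_mul_inv_mem
    (Or.inl ⟨i.castSucc, i.succ, by simp, Or.inl rfl⟩)

theorem ρ_braid (i : Fin n) :
    ρ i.castSucc * ρ i.succ * ρ i.castSucc = ρ i.succ * ρ i.castSucc * ρ i.succ :=
  PresentedGroup.mk_eq_mk_of_mul_inv_mem
    (Or.inl ⟨i.castSucc, i.succ, by simp, Or.inr (Or.inl rfl)⟩)

theorem ρ_mul_ρ_mul_σ (i : Fin n) :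
    ρ i.castSucc * ρ i.succ * σ i.castSucc = σ i.succ * ρ i.castSucc * ρ i.succ :=
  PresentedGroup.mk_eq_mk_of_mul_inv_mem
    (Or.inl ⟨i.castSucc, i.succ, by simp, Or.inr (Or.inr (Or.inl rfl))⟩)

theorem ρ_castSucc_mul_σ_mul_σ (i : Fin n) :
    ρ i.castSucc * σ i.succ * σ i.castSucc = σ i.succ * σ i.castSucc * ρ i.succ :=
  PresentedGroup.mk_eq_mk_of_mul_inv_mem
    (Or.inl ⟨i.castSucc, i.succ, by simp, Or.inr (Or.inr (Or.inr (Or.inl rfl)))⟩)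

theorem ρ_succ_mul_σ_mul_σ (i : Fin n) :
    ρ i.succ * σ i.castSucc * σ i.succ = σ i.castSucc * σ i.succ * ρ i.castSucc :=
  PresentedGroup.mk_eq_mk_of_mul_inv_mem
    (Or.inl ⟨i.castSucc, i.succ, by simp, Or.inr (Or.inr (Or.inr (Or.inr rfl)))⟩)

theorem σ_comm_σ {i j : Fin n} (h : (i : ℕ) + 2 ≤ j) : Commute (σ i) (σ j) :=
  PresentedGroup.mk_eq_mk_of_mul_inv_mem (Or.inr (Or.inl ⟨i, j, Or.inl h, Or.inl rfl⟩))

theorem ρ_comm_ρ {i j : Fin n} (h : (i : ℕ) + 2 ≤ j) : Commute (ρ i) (ρ j) :=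
  PresentedGroup.mk_eq_mk_of_mul_inv_mem (Or.inr (Or.inl ⟨i, j, Or.inl h, Or.inr (Or.inl rfl)⟩))

theorem σ_comm_ρ {i j : Fin n} (h : (i : ℕ) + 2 ≤ j ∨ (j : ℕ) + 2 ≤ i) : Commute (σ i) (ρ j) :=
  PresentedGroup.mk_eq_mk_of_mul_inv_mem (Or.inr (Or.inl ⟨i, j, h, Or.inr (Or.inr rfl)⟩))

theorem ρ_mul_self (i : Fin n) : ρ i * ρ i = 1 :=
  PresentedGroup.one_of_mem (Or.inr (Or.inr ⟨i, rfl⟩))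

@[elab_as_elim]
theorem induction_on {p : UVB (n + 1) → Prop} (x : UVB (n + 1)) (σ : ∀ i : Fin n, p (σ i))
    (ρ : ∀ i : Fin n, p (ρ i)) (one : p 1) (mul : ∀ x y, p x → p y → p (x * y))
    (inv : ∀ x, p x → p x⁻¹) : p x := by
  have hx : x ∈ Subgroup.closure (Set.range PresentedGroup.of) :=
    PresentedGroup.closure_range_of (uvbRels (n + 1)) ▸ Subgroup.mem_top x
  induction hx using Subgroup.closure_induction with
  | mem _ h => obtain ⟨i | i, rfl⟩ := h; exacts [σ i, ρ i]
  | one => exact one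
  | mul x y _ _ hx hy => exact mul x y hx hy
  | inv x _ hx => exact inv x hx

theorem mem_of_generators_mem (H : Subgroup (UVB (n + 1))) (hσ : ∀ i : Fin n, σ i ∈ H)
    (hρ : ∀ i : Fin n, ρ i ∈ H) (x : UVB (n + 1)) : x ∈ H :=
  induction_on x hσ hρ H.one_mem (fun _ _ => H.mul_mem) fun _ => H.inv_mem

theorem hom_ext {G : Type*} [Group G] {f g : UVB (n + 1) →* G}
    (hσ : ∀ i : Fin n, f (σ i) = g (σ i)) (hρ : ∀ i : Fin n, f (ρ i) = g (ρ i)) : f = g :=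
  PresentedGroup.ext (Sum.rec hσ hρ)

instance : Subsingleton (UVB 0) :=
  subsingleton_of_forall_eq 1 fun x =>
    PresentedGroup.generated_by _ ⊥ (Sum.rec (fun i => i.elim0) fun i => i.elim0) x

instance : Subsingleton (UVB 1) :=
  subsingleton_of_forall_eq 1 (mem_of_generators_mem ⊥ (fun i => i.elim0) fun i => i.elim0)

@[simp] theorem incl_σ (i : Fin n) : incl (n + 1) (σ i) = σ i.castSucc :=
  PresentedGroup.toGroup.of _

@[simp] theorem incl_ρ (i : Fin n) : incl (n + 1) (ρ i) = ρ i.castSucc :=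
  PresentedGroup.toGroup.of _

theorem incl_incl_comm_σ_last (x : UVB n) :
    Commute (incl (n + 1) (incl n x)) (σ (Fin.last n)) := by
  cases n with
  | zero => simp [Subsingleton.elim x 1]
  | succ n =>
    induction x using induction_on with
    | σ i => simpa using σ_comm_σ (by simp)
    | ρ i => simpa using (σ_comm_ρ (by simp)).symm
    | one => simp
    | mul x y hx hy => simpa using hx.mul_left hy
    | inv x hx => simpa using hx

theorem incl_incl_comm_ρ_last (x : UVB n) :
    Commute (incl (n + 1) (incl n x)) (ρ (Fin.last n)) := by
  cases n with
  | zero => simp [Subsingleton.elim x 1]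
  | succ n =>
    induction x using induction_on with
    | σ i => simpa using σ_comm_ρ (by simp)
    | ρ i => simpa using ρ_comm_ρ (by simp)
    | one => simp
    | mul x y hx hy => simpa using hx.mul_left hy
    | inv x hx => simpa using hx

end Relations

section LinkGroup

open SemidirectProduct Multiplicative

variable {α : Type*}

/-- The integer matrices indexed by `α`, written multiplicatively, extended by the permutations of
`α`, which act on rows and columns simultaneously. -/
abbrev LinkGroup (α : Type*) := (α × α → Multiplicative ℤ) ⋊[mulAutArrow] Perm α

theorem mulAutArrow_apply_pair (g : Perm α) (f : α × α → Multiplicative ℤ) (a b : α) :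
    mulAutArrow g f (a, b) = f (g⁻¹ a, g⁻¹ b) :=
  rfl

variable [DecidableEq α]

theorem mulAutArrow_mulSingle (g : Perm α) (a b : α) (z : Multiplicative ℤ) :
    mulAutArrow g (Pi.mulSingle (a, b) z : α × α → Multiplicative ℤ) =
      Pi.mulSingle (g a, g b) z := by
  ext ⟨x, y⟩
  simp only [mulAutArrow_apply_pair, Pi.mulSingle_apply, Prod.mk.injEq, Perm.inv_eq_iff_eq]

theorem swap_braid {a b c : α} (hab : a ≠ b) (hbc : b ≠ c) (hac : a ≠ c) :
    swap a b * swap b c * swap a b = swap b c * swap a b * swap b c := by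
  rw [swap_mul_swap_mul_swap hab hac, swap_comm b c, swap_comm a b,
    swap_mul_swap_mul_swap hbc.symm hac.symm, swap_comm]

/-- The image of a classical crossing of the strands `a` and `b` in `LinkGroup α`. The sign is such
that `λ_{a,b} = ρ σ⁻¹` has linking number `1`. -/
def crossing (a b : α) : LinkGroup α := ⟨Pi.mulSingle (a, b) (ofAdd (-1)), swap a b⟩

/-- The image of a virtual crossing of the strands `a` and `b` in `LinkGroup α`. -/
def virtualCrossing (a b : α) : LinkGroup α := inr (swap a b)

section CrossingRelations

variable {a b c d : α}

theorem virtualCrossing_mul_self (a b : α) : virtualCrossing a b * virtualCrossing a b = 1 := by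
  rw [virtualCrossing, ← map_mul, swap_mul_self, map_one]

theorem crossing_braid (hab : a ≠ b) (hbc : b ≠ c) (hac : a ≠ c) :
    crossing a b * crossing b c * crossing a b = crossing b c * crossing a b * crossing b c := by
  ext1
  · simp only [crossing, mul_left, mul_right, mulAutArrow_mulSingle, Perm.mul_apply,
      swap_apply_left, swap_apply_right, swap_apply_of_ne_of_ne, hab, hbc.symm, hac, hac.symm,
      ne_eq, not_false_eq_true]
    ac_rfl
  · exact swap_braid hab hbc hac

theorem virtualCrossing_braid (hab : a ≠ b) (hbc : b ≠ c) (hac : a ≠ c) :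
    virtualCrossing a b * virtualCrossing b c * virtualCrossing a b =
      virtualCrossing b c * virtualCrossing a b * virtualCrossing b c := by
  simp only [virtualCrossing, ← map_mul, swap_braid hab hbc hac]

theorem virtualCrossing_mul_virtualCrossing_mul_crossing (hab : a ≠ b) (hbc : b ≠ c)
    (hac : a ≠ c) :
    virtualCrossing a b * virtualCrossing b c * crossing a b =
      crossing b c * virtualCrossing a b * virtualCrossing b c := by
  ext1
  · simp [crossing, virtualCrossing, mulAutArrow_mulSingle, swap_apply_of_ne_of_ne, hab,
      hbc.symm, hac, hac.symm]
  · exact swap_braid hab hbc hac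

theorem virtualCrossing_mul_crossing_mul_crossing (hab : a ≠ b) (hbc : b ≠ c) (hac : a ≠ c) :
    virtualCrossing a b * crossing b c * crossing a b =
      crossing b c * crossing a b * virtualCrossing b c := by
  ext1
  · simp only [crossing, virtualCrossing, mul_left, mul_right, left_inr, right_inr, one_mul,
      map_one, mul_one, mulAutArrow_mulSingle, Perm.mul_apply, swap_apply_left, swap_apply_right,
      swap_apply_of_ne_of_ne, hab, hbc.symm, hac, hac.symm, ne_eq, not_false_eq_true]
    ac_rfl
  · exact swap_braid hab hbc hac

theorem virtualCrossing_mul_crossing_mul_crossing' (hab : a ≠ b) (hbc : b ≠ c) (hac : a ≠ c) :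
    virtualCrossing b c * crossing a b * crossing b c =
      crossing a b * crossing b c * virtualCrossing a b := by
  ext1
  · simp only [crossing, virtualCrossing, mul_left, mul_right, left_inr, right_inr, one_mul,
      map_one, mul_one, mulAutArrow_mulSingle, Perm.mul_apply, swap_apply_left, swap_apply_right,
      swap_apply_of_ne_of_ne, hab, hbc.symm, hac, hac.symm, ne_eq, not_false_eq_true]
    ac_rfl
  · exact (swap_braid hab hbc hac).symm

theorem crossing_comm_crossing (h : [a, b, c, d].Nodup) :
    Commute (crossing a b) (crossing c d) := by
  obtain ⟨⟨-, hac, had⟩, ⟨hbc, hbd⟩, -⟩ : (a ≠ b ∧ a ≠ c ∧ a ≠ d) ∧ (b ≠ c ∧ b ≠ d) ∧ c ≠ d := by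
    simpa using h
  ext1
  · simp [crossing, mulAutArrow_mulSingle, swap_apply_of_ne_of_ne, hac, hac.symm, had, had.symm,
      hbc, hbc.symm, hbd, hbd.symm, mul_comm]
  · exact (Perm.disjoint_swap_swap h).commute

theorem virtualCrossing_comm_virtualCrossing (h : [a, b, c, d].Nodup) :
    Commute (virtualCrossing a b) (virtualCrossing c d) :=
  (Perm.disjoint_swap_swap h).commute.map inr

theorem crossing_comm_virtualCrossing (h : [a, b, c, d].Nodup) :
    Commute (crossing a b) (virtualCrossing c d) := by
  obtain ⟨⟨-, hac, had⟩, ⟨hbc, hbd⟩, -⟩ : (a ≠ b ∧ a ≠ c ∧ a ≠ d) ∧ (b ≠ c ∧ b ≠ d) ∧ c ≠ d := by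
    simpa using h
  ext1
  · simp [crossing, virtualCrossing, mulAutArrow_mulSingle, swap_apply_of_ne_of_ne, hac, had,
      hbc, hbd]
  · exact (Perm.disjoint_swap_swap h).commute

end CrossingRelations

end LinkGroup

section LinkHom

/-- The images in `LinkGroup` of the generators of `UVB_{n+1}`. -/
def linkGen : UVBGen (n + 1) → LinkGroup (Fin (n + 1)) :=
  Sum.elim (fun i : Fin n => crossing i.castSucc i.succ) fun i => virtualCrossing i.castSucc i.succ

theorem lift_linkGen_eq_one : ∀ r ∈ uvbRels (n + 1), FreeGroup.lift linkGen r = 1 := by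
  have nodup (i j : Fin n) (hij : (i : ℕ) + 2 ≤ j ∨ (j : ℕ) + 2 ≤ i) :
      [i.castSucc, i.succ, j.castSucc, j.succ].Nodup := by
    grind
  rintro r (⟨i, j, hij, h⟩ | ⟨i, j, hij, h⟩ | ⟨i, rfl⟩)
  · have hj : j.castSucc = i.succ := Fin.ext hij
    have h₁ : i.castSucc ≠ i.succ := i.castSucc_lt_succ.ne
    have h₂ : i.succ ≠ j.succ := hj ▸ j.castSucc_lt_succ.ne
    have h₃ : i.castSucc ≠ j.succ := (i.castSucc_lt_succ.trans (hj ▸ j.castSucc_lt_succ)).ne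
    rcases h with rfl | rfl | rfl | rfl | rfl <;>
      rw [map_mul, map_inv, mul_inv_eq_one] <;>
      simp only [map_mul, UVBGen.sg, UVBGen.rg, FreeGroup.lift_apply_of, linkGen, Sum.elim_inl,
        Sum.elim_inr, hj]
    · exact crossing_braid h₁ h₂ h₃
    · exact virtualCrossing_braid h₁ h₂ h₃
    · exact virtualCrossing_mul_virtualCrossing_mul_crossing h₁ h₂ h₃
    · exact virtualCrossing_mul_crossing_mul_crossing h₁ h₂ h₃
    · exact virtualCrossing_mul_crossing_mul_crossing' h₁ h₂ h₃
  · rcases h with rfl | rfl | rfl <;>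
      rw [map_mul, map_inv, mul_inv_eq_one] <;>
      simp only [map_mul, UVBGen.sg, UVBGen.rg, FreeGroup.lift_apply_of, linkGen, Sum.elim_inl,
        Sum.elim_inr]
    · exact crossing_comm_crossing (nodup i j hij)
    · exact virtualCrossing_comm_virtualCrossing (nodup i j hij)
    · exact crossing_comm_virtualCrossing (nodup i j hij)
  · simpa [linkGen, UVBGen.rg] using virtualCrossing_mul_self _ _

/-- The homomorphism that records the permutation of a braid and all its linking numbers. -/
def link : ∀ n, UVB n →* LinkGroup (Fin n)
  | 0 => 1
  | _ + 1 => PresentedGroup.toGroup (f := linkGen) lift_linkGen_eq_one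

@[simp] theorem link_σ (i : Fin n) : link (n + 1) (σ i) = crossing i.castSucc i.succ :=
  PresentedGroup.toGroup.of lift_linkGen_eq_one

@[simp] theorem link_ρ (i : Fin n) : link (n + 1) (ρ i) = virtualCrossing i.castSucc i.succ :=
  PresentedGroup.toGroup.of lift_linkGen_eq_one

/-- The canonical homomorphism `ι : UVB_n → S_n`. -/
def toPerm (n : ℕ) : UVB n →* Perm (Fin n) := SemidirectProduct.rightHom.comp (link n)

@[simp] theorem toPerm_σ (i : Fin n) : toPerm (n + 1) (σ i) = swap i.castSucc i.succ := by
  simp [toPerm, crossing]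

@[simp] theorem toPerm_ρ (i : Fin n) : toPerm (n + 1) (ρ i) = swap i.castSucc i.succ := by
  simp [toPerm, virtualCrossing]

theorem eq_toPerm {ι : UVB n →* Perm (Fin n)} (hι : IsIota n ι) : ι = toPerm n := by
  cases n with
  | zero => exact Subsingleton.elim _ _
  | succ n =>
    refine hom_ext (fun i => ?_) fun i => ?_
    · rw [toPerm_σ, ← sigma_succ i.isLt]
      exact (hι (i + 1) (by lia) (by lia)).1
    · rw [toPerm_ρ, ← rho_succ i.isLt]
      exact (hι (i + 1) (by lia) (by lia)).2

/-- The `(i, j)` linking number of a braid: the exponent sum of `λ_{i,j}` after all virtual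
generators have been moved to the right. -/
def lk (x : UVB n) (i j : Fin n) : ℤ := Multiplicative.toAdd ((link n x).left (i, j))

@[simp] theorem lk_one (i j : Fin n) : lk 1 i j = 0 := by
  simp [lk]

theorem lk_mul (x y : UVB n) (i j : Fin n) :
    lk (x * y) i j = lk x i j + lk y ((toPerm n x)⁻¹ i) ((toPerm n x)⁻¹ j) := by
  simp only [lk, map_mul, SemidirectProduct.mul_left, Pi.mul_apply, mulAutArrow_apply_pair,
    toAdd_mul]
  rfl

theorem lk_inv (x : UVB n) (i j : Fin n) :
    lk x⁻¹ i j = -lk x (toPerm n x i) (toPerm n x j) := by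
  simp only [lk, map_inv, SemidirectProduct.inv_left, Pi.inv_apply, toAdd_inv]
  rfl

@[simp] theorem lk_ρ (k : Fin n) (i j : Fin (n + 1)) : lk (ρ k) i j = 0 := by
  simp [lk, virtualCrossing]

theorem lk_σ (k : Fin n) (i j : Fin (n + 1)) :
    lk (σ k) i j = if i = k.castSucc ∧ j = k.succ then -1 else 0 := by
  simp only [lk, link_σ, crossing, Pi.mulSingle_apply, Prod.mk.injEq]
  split_ifs <;> rfl

end LinkHom

section ExtendPerm

/-- Extension of a permutation of the first `n` points to `n + 1` points, fixing the last one. -/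
noncomputable def extendPerm (n : ℕ) : Perm (Fin n) →* Perm (Fin (n + 1)) :=
  Perm.viaEmbeddingHom Fin.castSuccEmb

@[simp] theorem extendPerm_castSucc (g : Perm (Fin n)) (i : Fin n) :
    extendPerm n g i.castSucc = (g i).castSucc :=
  g.viaEmbedding_apply Fin.castSuccEmb i

@[simp] theorem extendPerm_last (g : Perm (Fin n)) : extendPerm n g (Fin.last n) = Fin.last n :=
  g.viaEmbedding_apply_of_notMem Fin.castSuccEmb _ (by simp)

theorem extendPerm_swap (i j : Fin n) :
    extendPerm n (swap i j) = swap i.castSucc j.castSucc := by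
  ext x
  cases x using Fin.lastCases with
  | last =>
    rw [extendPerm_last,
      swap_apply_of_ne_of_ne i.castSucc_ne_last.symm j.castSucc_ne_last.symm]
  | cast x => rw [extendPerm_castSucc, (Fin.castSucc_injective n).map_swap]

theorem exists_eq_extendPerm {h : Perm (Fin (n + 1))} (hl : h (Fin.last n) = Fin.last n) :
    ∃ g, h = extendPerm n g := by
  have hne (i : Fin n) : h i.castSucc ≠ Fin.last n := fun hi =>
    i.castSucc_ne_last (h.injective (hi.trans hl.symm))
  choose g hg using fun i => Fin.exists_castSucc_eq.2 (hne i)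
  have hinj : Function.Injective g := fun i j hij => by
    simpa [hg] using congrArg Fin.castSucc hij
  refine ⟨Equiv.ofBijective g (Finite.injective_iff_bijective.1 hinj), ?_⟩
  ext x
  cases x using Fin.lastCases <;> simp [hl, hg]

theorem perm_mem_of_swap_mem (H : Subgroup (Perm (Fin (n + 1))))
    (h : ∀ i : Fin n, swap i.castSucc i.succ ∈ H) (g : Perm (Fin (n + 1))) : g ∈ H := by
  have : (⊤ : Submonoid (Perm (Fin (n + 1)))) ≤ H.toSubmonoid := by
    rw [← Perm.mclosure_swap_castSucc_succ, Submonoid.closure_le]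
    rintro _ ⟨i, rfl⟩
    exact h i
  exact this (Submonoid.mem_top g)

theorem perm_hom_ext {G : Type*} [Group G] {f g : Perm (Fin (n + 1)) →* G}
    (h : ∀ i : Fin n, f (swap i.castSucc i.succ) = g (swap i.castSucc i.succ)) : f = g :=
  MonoidHom.ext (perm_mem_of_swap_mem (f.eqLocus g) h)

end ExtendPerm

section InclInvariants

theorem toPerm_incl (x : UVB n) : toPerm (n + 1) (incl n x) = extendPerm n (toPerm n x) := by
  cases n with
  | zero => simp [Subsingleton.elim x 1]
  | succ n =>
    refine DFunLike.congr_fun (f := (toPerm _).comp (incl _)) (g := (extendPerm _).comp (toPerm _))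
      (hom_ext (fun i => ?_) fun i => ?_) x <;>
    simp [extendPerm_swap]

theorem lk_incl_castSucc (x : UVB n) (i j : Fin n) :
    lk (incl n x) i.castSucc j.castSucc = lk x i j := by
  cases n with
  | zero => exact i.elim0
  | succ n =>
    induction x using induction_on generalizing i j with
    | σ k => simp [lk_σ, ← Fin.castSucc_succ]
    | ρ k => simp
    | one => simp
    | mul x y hx hy => simp [lk_mul, toPerm_incl, hx, hy, ← map_inv]
    | inv x hx => simp [lk_inv, toPerm_incl, hx]

theorem lk_incl_of_eq_last (x : UVB n) {i j : Fin (n + 1)} (h : i = Fin.last n ∨ j = Fin.last n) :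
    lk (incl n x) i j = 0 := by
  cases n with
  | zero => simp [Subsingleton.elim x 1]
  | succ n =>
    induction x using induction_on generalizing i j with
    | σ k =>
      rw [incl_σ, lk_σ, if_neg]
      rintro ⟨rfl, rfl⟩
      simp only [Fin.ext_iff, Fin.val_castSucc, Fin.val_succ, Fin.val_last] at h
      lia
    | ρ k => simp
    | one => simp
    | mul x y hx hy =>
      rw [map_mul, lk_mul, hx h, hy, add_zero]
      rcases h with rfl | rfl <;> simp [toPerm_incl, ← map_inv]
    | inv x hx =>
      rw [map_inv, lk_inv, hx, neg_zero]
      rcases h with rfl | rfl <;> simp [toPerm_incl]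

end InclInvariants

section PermSection

variable {s : ∀ n, Perm (Fin n) →* UVB n} (hs : ∀ n, IsPermSection n (s n))

include hs

theorem section_swap (i : Fin n) : s (n + 1) (swap i.castSucc i.succ) = ρ i := by
  rw [← rho_succ i.isLt]
  exact hs (n + 1) (i + 1) (by lia) (by lia)

theorem incl_section (g : Perm (Fin n)) :
    incl n (s n g) = s (n + 1) (extendPerm n g) := by
  cases n with
  | zero => simp [Subsingleton.elim g 1]
  | succ n =>
    refine DFunLike.congr_fun (f := (incl _).comp (s _)) (g := (s _).comp (extendPerm _))
      (perm_hom_ext fun i => ?_) g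
    rw [MonoidHom.comp_apply, MonoidHom.comp_apply, section_swap hs, incl_ρ, extendPerm_swap,
      Fin.castSucc_succ, section_swap hs]

theorem link_section (g : Perm (Fin n)) : link n (s n g) = SemidirectProduct.inr g := by
  cases n with
  | zero => simp [Subsingleton.elim g 1]
  | succ n =>
    refine DFunLike.congr_fun (f := (link _).comp (s _)) (perm_hom_ext fun i => ?_) g
    simp [section_swap hs, virtualCrossing]

theorem toPerm_section (g : Perm (Fin n)) : toPerm n (s n g) = g := by
  simp [toPerm, link_section hs]

theorem lk_section (g : Perm (Fin n)) (i j : Fin n) : lk (s n g) i j = 0 := by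
  simp [lk, link_section hs]

end PermSection

section AdjacentPureGen

/-- The pure braid `λ_{i,i+1} = ρ_i σ_i⁻¹` on two adjacent strands. -/
def adjPureGen (i : Fin n) : UVB (n + 1) := ρ i * (σ i)⁻¹

theorem inv_adjPureGen_mul_ρ (i : Fin n) : (adjPureGen i)⁻¹ * ρ i = σ i := by
  rw [adjPureGen, mul_inv_rev, inv_inv, inv_mul_cancel_right]

theorem incl_adjPureGen (i : Fin n) : incl (n + 1) (adjPureGen i) = adjPureGen i.castSucc := by
  simp [adjPureGen]

theorem incl_incl_comm_adjPureGen_last (x : UVB n) :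
    Commute (incl (n + 1) (incl n x)) (adjPureGen (Fin.last n)) :=
  (incl_incl_comm_ρ_last x).mul_right (incl_incl_comm_σ_last x).inv_right

theorem ρ_mul_ρ_semiconj_adjPureGen (i : Fin n) :
    SemiconjBy (ρ i.castSucc * ρ i.succ) (adjPureGen i.castSucc) (adjPureGen i.succ) := by
  have hσ : SemiconjBy (ρ i.castSucc * ρ i.succ) (σ i.castSucc) (σ i.succ) :=
    (ρ_mul_ρ_mul_σ i).trans (mul_assoc _ _ _)
  have hρ : SemiconjBy (ρ i.castSucc * ρ i.succ) (ρ i.castSucc) (ρ i.succ) :=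
    (ρ_braid i).trans (mul_assoc _ _ _)
  exact hρ.mul_right hσ.inv_right

theorem lk_adjPureGen (i : Fin n) (k l : Fin (n + 1)) :
    lk (adjPureGen i) k l = if k = i.castSucc ∧ l = i.succ then 1 else 0 := by
  simp only [adjPureGen, lk_mul, lk_inv, lk_ρ, lk_σ, toPerm_ρ, toPerm_σ, swap_inv, swap_apply_self,
    zero_add]
  simp [apply_ite Neg.neg]

end AdjacentPureGen

section PureGen

theorem exists_perm_apply_pair {α : Type*} {a b i j : α} (hab : a ≠ b) (hij : i ≠ j) :
    ∃ g : Perm α, g a = i ∧ g b = j := by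
  obtain ⟨g, hg⟩ := Perm.exists_extending_pair ![a, b] ![i, j]
    (by simpa [Function.Injective, Fin.forall_fin_two, eq_comm] using hab)
    (by simpa [Function.Injective, Fin.forall_fin_two, eq_comm] using hij)
  exact ⟨g, hg 0, hg 1⟩

theorem exists_perm_apply_triple {α : Type*} {a b c i j k : α} (h : [a, b, c].Nodup)
    (h' : [i, j, k].Nodup) : ∃ g : Perm α, g a = i ∧ g b = j ∧ g c = k := by
  obtain ⟨g, hg⟩ := Perm.exists_extending_pair [a, b, c].get [i, j, k].get
    (List.nodup_iff_injective_get.1 h) (List.nodup_iff_injective_get.1 h')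
  exact ⟨g, hg 0, hg 1, hg 2⟩

open Classical in
/-- The pure braid `λ_{i,j}`, with zero-based indices and `λ_{i,i} = 1`: the conjugate of the
adjacent one on the last two strands by any permutation that takes these strands to `i` and `j`. -/
noncomputable def pureGen (s : ∀ n, Perm (Fin n) →* UVB n) : ∀ {n : ℕ}, Fin n → Fin n → UVB n
  | 0, _, _ => 1
  | 1, _, _ => 1
  | m + 2, i, j =>
    if h : ∃ g : Perm (Fin (m + 2)), g (Fin.last m).castSucc = i ∧ g (Fin.last m).succ = j then
      s _ h.choose * adjPureGen (Fin.last m) * (s _ h.choose)⁻¹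
    else 1

variable {s : ∀ n, Perm (Fin n) →* UVB n}

@[simp] theorem pureGen_self (i : Fin n) : pureGen s i i = 1 := by
  match n, i with
  | 0, _ => rfl
  | 1, _ => rfl
  | m + 2, i =>
    refine dif_neg ?_
    rintro ⟨g, h₁, h₂⟩
    exact (Fin.last m).castSucc_lt_succ.ne (g.injective (h₁.trans h₂.symm))

variable (hs : ∀ n, IsPermSection n (s n))

include hs

theorem section_comm_adjPureGen_last {m : ℕ} {h : Perm (Fin (m + 2))}
    (h₁ : h (Fin.last m).castSucc = (Fin.last m).castSucc)
    (h₂ : h (Fin.last m).succ = (Fin.last m).succ) :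
    Commute (s (m + 2) h) (adjPureGen (Fin.last m)) := by
  rw [Fin.succ_last] at h₂
  obtain ⟨g, rfl⟩ := exists_eq_extendPerm h₂
  rw [extendPerm_castSucc, Fin.castSucc_inj] at h₁
  obtain ⟨g, rfl⟩ := exists_eq_extendPerm h₁
  rw [← incl_section hs, ← incl_section hs]
  exact incl_incl_comm_adjPureGen_last _

theorem section_semiconj_adjPureGen_last {m : ℕ} (g : Perm (Fin (m + 2))) :
    SemiconjBy (s (m + 2) g) (adjPureGen (Fin.last m))
      (pureGen s (g (Fin.last m).castSucc) (g (Fin.last m).succ)) := by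
  have ex : ∃ g' : Perm (Fin (m + 2)), g' (Fin.last m).castSucc = g (Fin.last m).castSucc ∧
    g' (Fin.last m).succ = g (Fin.last m).succ := ⟨g, rfl, rfl⟩
  obtain ⟨h₁, h₂⟩ := ex.choose_spec
  have hc : Commute (s (m + 2) (ex.choose⁻¹ * g)) (adjPureGen (Fin.last m)) :=
    section_comm_adjPureGen_last hs (Perm.inv_eq_iff_eq.2 h₁.symm) (Perm.inv_eq_iff_eq.2 h₂.symm)
  have hp : pureGen s (g (Fin.last m).castSucc) (g (Fin.last m).succ) =
    s _ ex.choose * adjPureGen (Fin.last m) * (s _ ex.choose)⁻¹ := dif_pos ex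
  rw [hp]
  simpa using (SemiconjBy.conj_mk (s _ ex.choose) (adjPureGen (Fin.last m))).mul_left hc

theorem section_semiconj_adjPureGen (i : Fin n) (g : Perm (Fin (n + 1))) :
    SemiconjBy (s (n + 1) g) (adjPureGen i) (pureGen s (g i.castSucc) (g i.succ)) := by
  match n, i with
  | m + 1, i =>
  induction i using Fin.reverseInduction generalizing g with
  | last => exact section_semiconj_adjPureGen_last hs g
  | cast i ih =>
    set t := swap i.castSucc.castSucc i.castSucc.succ * swap i.succ.castSucc i.succ.succ with ht
    have h₁ : i.castSucc.castSucc ≠ i.castSucc.succ := by grind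
    have h₂ : i.castSucc.castSucc ≠ i.succ.succ := by grind
    have h₃ : i.castSucc.succ ≠ i.succ.succ := by grind
    have t₁ : t i.castSucc.castSucc = i.castSucc.succ := by
      simp [t, swap_apply_of_ne_of_ne h₁ h₂]
    have t₂ : t i.castSucc.succ = i.succ.succ := by
      simp [t, swap_apply_of_ne_of_ne h₂.symm h₃.symm]
    have hst : s _ t = ρ i.castSucc * ρ i.succ := by
      rw [ht, map_mul, section_swap hs, section_swap hs]
    have := (ih (g * t⁻¹)).mul_left (hst ▸ ρ_mul_ρ_semiconj_adjPureGen i)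
    simpa [Perm.mul_apply, ← t₁, ← t₂] using this

theorem section_semiconj_pureGen (g : Perm (Fin n)) (i j : Fin n) :
    SemiconjBy (s n g) (pureGen s i j) (pureGen s (g i) (g j)) := by
  obtain rfl | hij := eq_or_ne i j
  · simp
  match n with
  | 0 => exact i.elim0
  | 1 => exact absurd (Subsingleton.elim i j) hij
  | m + 2 =>
    obtain ⟨g₀, rfl, rfl⟩ :=
      exists_perm_apply_pair (Fin.castSucc_lt_succ (i := Fin.last m)).ne hij
    simpa using (section_semiconj_adjPureGen_last hs (g * g₀)).mul_left
      (section_semiconj_adjPureGen_last hs g₀).inv_symm_left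

theorem pureGen_castSucc_succ (i : Fin n) : pureGen s i.castSucc i.succ = adjPureGen i := by
  simpa [SemiconjBy] using (section_semiconj_adjPureGen hs i 1).symm

theorem ρ_semiconj_pureGen (k : Fin n) (i j : Fin (n + 1)) :
    SemiconjBy (ρ k) (pureGen s i j)
      (pureGen s (swap k.castSucc k.succ i) (swap k.castSucc k.succ j)) := by
  simpa [section_swap hs] using section_semiconj_pureGen hs (swap k.castSucc k.succ) i j

theorem pureGen_mul_ρ (k : Fin n) : (pureGen s k.castSucc k.succ)⁻¹ * ρ k = σ k := by
  rw [pureGen_castSucc_succ hs, inv_adjPureGen_mul_ρ]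

theorem toPerm_pureGen (i j : Fin n) : toPerm n (pureGen s i j) = 1 := by
  obtain rfl | hij := eq_or_ne i j
  · simp
  match n with
  | 0 => exact i.elim0
  | 1 => exact absurd (Subsingleton.elim i j) hij
  | m + 2 =>
    obtain ⟨g, rfl, rfl⟩ :=
      exists_perm_apply_pair (Fin.castSucc_lt_succ (i := Fin.last m)).ne hij
    have := (section_semiconj_adjPureGen_last hs g).map (toPerm _)
    simpa [adjPureGen, SemiconjBy] using this

theorem lk_pureGen {i j : Fin n} (hij : i ≠ j) (k l : Fin n) :
    lk (pureGen s i j) k l = if k = i ∧ l = j then 1 else 0 := by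
  match n with
  | 0 => exact i.elim0
  | 1 => exact absurd (Subsingleton.elim i j) hij
  | m + 2 =>
    obtain ⟨g, rfl, rfl⟩ :=
      exists_perm_apply_pair (Fin.castSucc_lt_succ (i := Fin.last m)).ne hij
    have := congrArg (lk · k l) (section_semiconj_adjPureGen_last hs g)
    simpa [lk_mul, lk_section hs, toPerm_section hs, toPerm_pureGen hs, lk_adjPureGen,
      symm_apply_eq] using this.symm

theorem incl_pureGen (i j : Fin n) :
    incl n (pureGen s i j) = pureGen s i.castSucc j.castSucc := by
  obtain rfl | hij := eq_or_ne i j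
  · simp
  match n with
  | 0 => exact i.elim0
  | 1 => exact absurd (Subsingleton.elim i j) hij
  | m + 2 =>
    obtain ⟨g, rfl, rfl⟩ :=
      exists_perm_apply_pair (Fin.castSucc_lt_succ (i := Fin.last m)).ne hij
    have h₁ := (section_semiconj_adjPureGen_last hs g).map (incl _)
    have h₂ := section_semiconj_adjPureGen hs (Fin.last m).castSucc (extendPerm _ g)
    rw [incl_adjPureGen, incl_section hs] at h₁
    rw [extendPerm_castSucc, ← Fin.castSucc_succ, extendPerm_castSucc] at h₂
    exact mul_right_cancel (h₁.symm.trans h₂)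

end PureGen

section PureGenCommute

theorem mul_mul_eq_of_semiconjBy {G : Type*} [Semigroup G] {r a b : G} (h : SemiconjBy r a b)
    (w : G) : r * (a * w) = b * (r * w) := by
  rw [← mul_assoc, h.eq, mul_assoc]

theorem commute_of_fused_relations {G : Type*} [Group G] {x y z r t : G}
    (ry : SemiconjBy r y z) (rz : SemiconjBy r z y) (tx : SemiconjBy t x z) (tz : SemiconjBy t z x)
    (hrt : r * t * r = t * r * t)
    (h₁ : r * (y * t) * (x * r) = y * t * (x * r) * t)
    (h₂ : t * (x * r) * (y * t) = x * r * (y * t) * r)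
    (h₃ : x * r * (y * t) * (x * r) = y * t * (x * r) * (y * t)) :
    Commute z y ∧ Commute z x ∧ Commute x y := by
  have push := And.intro (mul_mul_eq_of_semiconjBy ry) (And.intro (mul_mul_eq_of_semiconjBy rz)
    (And.intro (mul_mul_eq_of_semiconjBy tx) (mul_mul_eq_of_semiconjBy tz)))
  simp only [mul_assoc, push] at hrt h₁ h₂ h₃
  simp only [hrt] at h₁ h₂ h₃
  simp only [← mul_assoc, mul_left_inj] at h₁ h₂ h₃
  refine ⟨h₁, h₂, mul_left_cancel (a := z) ?_⟩
  rw [← mul_assoc, h₂, h₃, ← h₁, mul_assoc]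

variable {s : ∀ n, Perm (Fin n) →* UVB n} (hs : ∀ n, IsPermSection n (s n))

include hs

theorem pureGen_apply (g : Perm (Fin n)) (i j : Fin n) :
    pureGen s (g i) (g j) = s n g * pureGen s i j * (s n g)⁻¹ :=
  eq_mul_inv_of_mul_eq (section_semiconj_pureGen hs g i j).eq.symm

theorem commute_pureGen_apply (g : Perm (Fin n)) {i j k l : Fin n}
    (h : Commute (pureGen s i j) (pureGen s k l)) :
    Commute (pureGen s (g i) (g j)) (pureGen s (g k) (g l)) := by
  simpa only [pureGen_apply hs] using h.conj (s n g)

theorem commute_pureGen_of_adjacent (i : Fin n) :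
    let a := i.castSucc.castSucc
    let b := i.castSucc.succ
    let c := i.succ.succ
    Commute (pureGen s a c) (pureGen s b c) ∧ Commute (pureGen s a c) (pureGen s a b) ∧
      Commute (pureGen s a b) (pureGen s b c) := by
  intro a b c
  have hab : a ≠ b := by grind
  have hbc : b ≠ c := by grind
  have hac : a ≠ c := by grind
  have hr : (pureGen s a b)⁻¹ * ρ i.castSucc = σ i.castSucc := pureGen_mul_ρ hs i.castSucc
  have ht : (pureGen s b c)⁻¹ * ρ i.succ = σ i.succ := pureGen_mul_ρ hs i.succ
  have ry := ρ_semiconj_pureGen hs i.castSucc b c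
  have rz := ρ_semiconj_pureGen hs i.castSucc a c
  have tx := ρ_semiconj_pureGen hs i.succ a b
  have tz := ρ_semiconj_pureGen hs i.succ a c
  rw [swap_apply_right, swap_apply_of_ne_of_ne hac.symm hbc.symm] at ry
  rw [swap_apply_left, swap_apply_of_ne_of_ne hac.symm hbc.symm] at rz
  rw [Fin.castSucc_succ, swap_apply_left, swap_apply_of_ne_of_ne hab hac] at tx
  rw [Fin.castSucc_succ, swap_apply_right, swap_apply_of_ne_of_ne hab hac] at tz
  obtain ⟨h₁, h₂, h₃⟩ := commute_of_fused_relations ry.inv_right rz.inv_right tx.inv_right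
    tz.inv_right (ρ_braid i) (by simpa only [hr, ht] using ρ_castSucc_mul_σ_mul_σ i)
    (by simpa only [hr, ht] using ρ_succ_mul_σ_mul_σ i) (by simpa only [hr, ht] using σ_braid i)
  exact ⟨Commute.inv_inv_iff.1 h₁, Commute.inv_inv_iff.1 h₂, Commute.inv_inv_iff.1 h₃⟩

theorem commute_pureGen_of_three {i j k : Fin n} (h : [i, j, k].Nodup) :
    Commute (pureGen s i k) (pureGen s j k) ∧ Commute (pureGen s i k) (pureGen s i j) ∧
      Commute (pureGen s i j) (pureGen s j k) := by
  match n with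
  | 0 => exact i.elim0
  | 1 => exact absurd (Subsingleton.elim i j) (by simp_all)
  | 2 => grind
  | m + 3 =>
    obtain ⟨g, rfl, rfl, rfl⟩ := exists_perm_apply_triple
      (a := (0 : Fin (m + 1)).castSucc.castSucc) (b := (0 : Fin (m + 1)).castSucc.succ)
      (c := (0 : Fin (m + 1)).succ.succ) (by grind) h
    exact (commute_pureGen_of_adjacent hs 0).imp (commute_pureGen_apply hs g)
      (And.imp (commute_pureGen_apply hs g) (commute_pureGen_apply hs g))

theorem commute_pureGen_of_four {i j k l : Fin n} (h : [i, j, k, l].Nodup) :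
    Commute (pureGen s i j) (pureGen s k l) := by
  match n with
  | 0 => exact i.elim0
  | 1 => exact absurd (Subsingleton.elim i j) (by simp_all)
  | m + 2 =>
    obtain ⟨g, rfl, rfl⟩ := exists_perm_apply_pair (Fin.castSucc_lt_succ (i := Fin.last m)).ne
      (show k ≠ l by simp_all)
    have hg (x : Fin (m + 2)) (h₁ : x ≠ g (Fin.last m).castSucc) (h₂ : x ≠ g (Fin.last m).succ) :
        ∃ y : Fin m, g y.castSucc.castSucc = x := by
      obtain ⟨x, rfl⟩ := g.surjective x
      obtain ⟨x, rfl⟩ := Fin.exists_castSucc_eq.2 (fun hx => h₂ (congrArg g hx))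
      obtain ⟨x, rfl⟩ := Fin.exists_castSucc_eq.2 (fun hx => h₁ (congrArg (g ·.castSucc) hx))
      exact ⟨x, rfl⟩
    obtain ⟨i, rfl⟩ := hg i (by simp_all) (by simp_all)
    obtain ⟨j, rfl⟩ := hg j (by simp_all) (by simp_all)
    refine commute_pureGen_apply hs g ?_
    rw [← incl_pureGen hs, ← incl_pureGen hs, pureGen_castSucc_succ hs]
    exact incl_incl_comm_adjPureGen_last _

theorem commute_pureGen {i j k l : Fin n} (h : s(i, j) ≠ s(k, l)) :
    Commute (pureGen s i j) (pureGen s k l) := by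
  obtain rfl | hij := eq_or_ne i j
  · simp
  obtain rfl | hkl := eq_or_ne k l
  · simp
  by_cases hik : i = k
  · subst hik
    exact (commute_pureGen_of_three hs (i := i) (j := j) (k := l) (by grind)).2.1.symm
  by_cases hjl : j = l
  · subst hjl
    exact (commute_pureGen_of_three hs (i := i) (j := k) (k := j) (by grind)).1
  by_cases hjk : j = k
  · subst hjk
    exact (commute_pureGen_of_three hs (i := i) (j := j) (k := l) (by grind)).2.2
  by_cases hil : i = l
  · subst hil
    exact (commute_pureGen_of_three hs (i := k) (j := i) (k := j) (by grind)).2.2.symm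
  exact commute_pureGen_of_four hs (by grind)

end PureGenCommute

section MarkovClass

/-- The class of a braid under fused Markov equivalence. -/
def markovClass (x : UVB n) : Quotient (Relation.EqvGen.setoid MarkovBase) := Quotient.mk _ ⟨n, x⟩

theorem markovClass_eq_iff {m : ℕ} {x : UVB n} {y : UVB m} :
    markovClass x = markovClass y ↔ Markov ⟨n, x⟩ ⟨m, y⟩ :=
  Quotient.eq (r := Relation.EqvGen.setoid MarkovBase)

theorem markovClass_eq_of_base {m : ℕ} {x : UVB n} {y : UVB m}
    (h : MarkovBase ⟨n, x⟩ ⟨m, y⟩) : markovClass x = markovClass y :=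
  markovClass_eq_iff.2 (Relation.EqvGen.rel _ _ h)

theorem markovClass_conj (g x : UVB n) : markovClass (g * x * g⁻¹) = markovClass x :=
  (markovClass_eq_of_base (.conj n x g)).symm

theorem markovClass_mul_comm (x y : UVB n) : markovClass (x * y) = markovClass (y * x) := by
  simpa [mul_assoc] using (markovClass_conj y (x * y)).symm

theorem markovClass_incl_mul_inv_σ_last (x : UVB (n + 1)) :
    markovClass (incl (n + 1) x * (σ (Fin.last n))⁻¹) = markovClass x := by
  rw [← sigma_succ_self]
  exact (markovClass_eq_of_base (.stabNeg (n + 1) x)).symm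

theorem markovClass_incl_mul_ρ_last (x : UVB (n + 1)) :
    markovClass (incl (n + 1) x * ρ (Fin.last n)) = markovClass x := by
  rw [← rho_succ_self]
  exact (markovClass_eq_of_base (.stabVirt (n + 1) x)).symm

theorem markovClass_incl_mul_conj_mul_incl {u : UVB (n + 1)}
    (hu : ∀ x, markovClass (incl n x * u) = markovClass x) (x g y : UVB n) :
    markovClass (incl n x * (incl n g * u * (incl n g)⁻¹) * incl n y) = markovClass (x * y) := by
  calc markovClass (incl n x * (incl n g * u * (incl n g)⁻¹) * incl n y)
    _ = markovClass (incl n (x * g) * u * incl n (g⁻¹ * y)) := by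
      simp only [map_mul, map_inv, mul_assoc]
    _ = markovClass (incl n (g⁻¹ * y * (x * g)) * u) := by
      rw [markovClass_mul_comm, map_mul _ (g⁻¹ * y), mul_assoc]
    _ = markovClass (x * y) := by
      rw [hu, markovClass_mul_comm, mul_assoc, mul_inv_cancel_left]

variable {s : ∀ n, Perm (Fin n) →* UVB n} (hs : ∀ n, IsPermSection n (s n))

include hs

theorem section_swap_last (k : Fin (n + 1)) :
    s (n + 2) (swap k.castSucc (Fin.last (n + 1))) =
      incl (n + 1) (s (n + 1) (swap k (Fin.last n))) * ρ (Fin.last n) *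
        (incl (n + 1) (s (n + 1) (swap k (Fin.last n))))⁻¹ := by
  rw [incl_section hs, ← section_swap hs, ← map_inv, ← map_mul, ← map_mul, ← swap_apply_apply,
    extendPerm_castSucc, swap_apply_right, Fin.succ_last, extendPerm_last]

theorem pureGen_last (k : Fin (n + 1)) :
    pureGen s k.castSucc (Fin.last (n + 1)) =
      incl (n + 1) (s (n + 1) (swap k (Fin.last n))) * adjPureGen (Fin.last n) *
        (incl (n + 1) (s (n + 1) (swap k (Fin.last n))))⁻¹ := by
  rw [incl_section hs, ← pureGen_castSucc_succ hs, ← pureGen_apply hs, extendPerm_castSucc,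
    swap_apply_right, Fin.succ_last, extendPerm_last]

theorem markovClass_virtual_kink (k : Fin n) (x y : UVB n) :
    markovClass (incl n x * s (n + 1) (swap k.castSucc (Fin.last n)) * incl n y) =
      markovClass (x * y) := by
  match n with
  | n + 1 =>
    rw [section_swap_last hs]
    exact markovClass_incl_mul_conj_mul_incl markovClass_incl_mul_ρ_last _ _ _

theorem markovClass_negative_kink (k : Fin n) (x : UVB n) :
    markovClass (incl n x * (s (n + 1) (swap k.castSucc (Fin.last n)) *
      pureGen s k.castSucc (Fin.last n))) = markovClass x := by
  match n with
  | n + 1 =>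
    set g := incl (n + 1) (s (n + 1) (swap k (Fin.last n))) with hg
    have h : s (n + 2) (swap k.castSucc (Fin.last (n + 1))) *
        pureGen s k.castSucc (Fin.last (n + 1)) = g * (σ (Fin.last n))⁻¹ * g⁻¹ := by
      rw [section_swap_last hs, pureGen_last hs, ← hg, adjPureGen]
      simp only [mul_assoc, inv_mul_cancel_left]
      rw [← mul_assoc (ρ _), ρ_mul_self, one_mul]
    simpa [h] using markovClass_incl_mul_conj_mul_incl markovClass_incl_mul_inv_σ_last x
      (s (n + 1) (swap k (Fin.last n))) 1

end MarkovClass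

section MarkovKernel

/-- The elements of `UVB n` that can be inserted into any braid without changing its Markov
class. -/
def markovKernel (n : ℕ) : Subgroup (UVB n) where
  carrier := {c | ∀ x : UVB n, markovClass (x * c) = markovClass x}
  one_mem' x := by rw [mul_one]
  mul_mem' {a b} ha hb x := by rw [← mul_assoc, hb, ha]
  inv_mem' {a} ha x := by rw [← ha (x * a⁻¹), inv_mul_cancel_right]

instance normal_markovKernel : (markovKernel n).Normal where
  conj_mem c hc g x := by
    calc markovClass (x * (g * c * g⁻¹))
      _ = markovClass (g⁻¹ * x * g * c) := by
        rw [← mul_assoc, markovClass_mul_comm]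
        simp only [mul_assoc]
      _ = markovClass (g⁻¹ * x * g) := hc _
      _ = markovClass x := by simpa using markovClass_conj g⁻¹ x

theorem commutator_mem_markovKernel {x y : UVB n}
    (h : ∀ a, markovClass (a * x * y) = markovClass (a * y * x)) : ⁅x, y⁆ ∈ markovKernel n := by
  intro a
  calc markovClass (a * ⁅x, y⁆)
    _ = markovClass ((y * x)⁻¹ * a * x * y) := by
      rw [mul_assoc, mul_assoc, markovClass_mul_comm (y * x)⁻¹, commutatorElement_def]
      simp only [mul_inv_rev, mul_assoc]
    _ = markovClass ((y * x)⁻¹ * a * y * x) := h _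
    _ = markovClass a := by
      rw [mul_assoc, markovClass_mul_comm]
      simp [mul_assoc]

variable {s : ∀ n, Perm (Fin n) →* UVB n}

/-- The braid `λ_{b,a}` with virtual kinks inserted on the strands `a` and `b`; the two new strands
come last. It interchanges `λ_{a,b}` with the corresponding generator of the new strands. -/
noncomputable def doubleKink (s : ∀ n, Perm (Fin n) →* UVB n) (a b : Fin n) : UVB (n + 2) :=
  pureGen s b.castSucc.castSucc (Fin.last n).castSucc *
    s (n + 2) (swap a.castSucc.castSucc (Fin.last n).castSucc *
      swap b.castSucc.castSucc (Fin.last (n + 1)))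

variable (hs : ∀ n, IsPermSection n (s n))

include hs

theorem markovClass_doubleKink {a b : Fin n} (hab : a ≠ b) (x y : UVB n) :
    markovClass (incl (n + 1) (incl n x) * doubleKink s a b * incl (n + 1) (incl n y)) =
      markovClass (x * pureGen s b a * y) := by
  let g := swap a.castSucc.castSucc (Fin.last n).castSucc
  have slide : SemiconjBy (s (n + 1 + 1) g)
      (pureGen s b.castSucc.castSucc a.castSucc.castSucc)
      (pureGen s b.castSucc.castSucc (Fin.last n).castSucc) := by
    have := section_semiconj_pureGen hs g b.castSucc.castSucc a.castSucc.castSucc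
    rwa [swap_apply_left, swap_apply_of_ne_of_ne (by simpa using hab.symm) (by simp)] at this
  rw [mul_assoc x, ← markovClass_virtual_kink hs a, map_mul, ← mul_assoc,
    ← markovClass_virtual_kink hs b.castSucc]
  simp only [map_mul, incl_pureGen hs, incl_section hs, extendPerm_swap, doubleKink, mul_assoc]
  rw [mul_mul_eq_of_semiconjBy slide]

theorem pureGen_mul_section_semiconj {a b c d : Fin n} (h : [a, b, c, d].Nodup) :
    SemiconjBy (pureGen s b c * s n (swap a c * swap b d)) (pureGen s a b) (pureGen s c d) ∧
      SemiconjBy (pureGen s b c * s n (swap a c * swap b d)) (pureGen s c d) (pureGen s a b) := by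
  obtain ⟨⟨hab, -, had⟩, ⟨hbc, -⟩, hcd⟩ :
      (a ≠ b ∧ a ≠ c ∧ a ≠ d) ∧ (b ≠ c ∧ b ≠ d) ∧ c ≠ d := by
    simpa using h
  have slide := section_semiconj_pureGen hs (swap a c * swap b d)
  have h₁ := slide a b
  have h₂ := slide c d
  rw [Perm.mul_apply, Perm.mul_apply, swap_apply_of_ne_of_ne hab had, swap_apply_left,
    swap_apply_left, swap_apply_of_ne_of_ne had.symm hcd.symm] at h₁
  rw [Perm.mul_apply, Perm.mul_apply, swap_apply_of_ne_of_ne hbc.symm hcd, swap_apply_right,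
    swap_apply_right, swap_apply_of_ne_of_ne hab.symm hbc] at h₂
  exact ⟨.mul_left (commute_pureGen hs (by grind)) h₁, .mul_left (commute_pureGen hs (by grind)) h₂⟩

theorem doubleKink_semiconj {a b : Fin n} (hab : a ≠ b) :
    SemiconjBy (doubleKink s a b) (pureGen s a.castSucc.castSucc b.castSucc.castSucc)
      (adjPureGen (Fin.last n)) ∧
    SemiconjBy (doubleKink s a b) (adjPureGen (Fin.last n))
      (pureGen s a.castSucc.castSucc b.castSucc.castSucc) := by
  rw [← pureGen_castSucc_succ hs, Fin.succ_last]
  exact pureGen_mul_section_semiconj hs (by simp [hab, Fin.castSucc_ne_last])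

theorem markovClass_mul_pureGen_comm (x : UVB n) {a b : Fin n} (hab : a ≠ b) :
    markovClass (x * pureGen s a b * pureGen s b a) =
      markovClass (x * pureGen s b a * pureGen s a b) := by
  obtain ⟨h₁, h₂⟩ := doubleKink_semiconj hs hab
  have hX : incl (n + 1) (incl n (pureGen s a b)) =
      pureGen s a.castSucc.castSucc b.castSucc.castSucc := by
    rw [incl_pureGen hs, incl_pureGen hs]
  set Z := adjPureGen (Fin.last n)
  set w := doubleKink s a b
  set X := pureGen s a.castSucc.castSucc b.castSucc.castSucc
  set A := incl (n + 1) (incl n x)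
  calc markovClass (x * pureGen s a b * pureGen s b a)
    _ = markovClass (A * (X * w)) := by
      simpa [hX, mul_assoc] using (markovClass_doubleKink hs hab (x * pureGen s a b) 1).symm
    _ = markovClass (Z * (A * w)) := by
      rw [← h₂.eq, ← mul_assoc, markovClass_mul_comm]
    _ = markovClass (A * (w * X)) := by
      rw [← mul_assoc, ← (incl_incl_comm_adjPureGen_last x).eq, mul_assoc, h₁.eq]
    _ = markovClass (x * pureGen s b a * pureGen s a b) := by
      rw [← markovClass_doubleKink hs hab, hX, mul_assoc]

theorem commutator_pureGen_mem_markovKernel (i j k l : Fin n) :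
    ⁅pureGen s i j, pureGen s k l⁆ ∈ markovKernel n := by
  obtain rfl | hij := eq_or_ne i j
  · simp
  obtain h | h := eq_or_ne s(i, j) s(k, l)
  · obtain ⟨rfl, rfl⟩ | ⟨rfl, rfl⟩ := Sym2.eq_iff.1 h
    · simp
    · exact commutator_mem_markovKernel fun x => markovClass_mul_pureGen_comm hs x hij
  · rw [commutatorElement_eq_one_iff_commute.2 (commute_pureGen hs h)]
    exact one_mem _

end MarkovKernel

section PureBraids

theorem incl_mem_ker {x : UVB n} (hx : x ∈ (toPerm n).ker) : incl n x ∈ (toPerm (n + 1)).ker := by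
  rw [MonoidHom.mem_ker, toPerm_incl, MonoidHom.mem_ker.1 hx, map_one]

variable {s : ∀ n, Perm (Fin n) →* UVB n} (hs : ∀ n, IsPermSection n (s n))

include hs

theorem pureGen_mem_ker (i j : Fin n) : pureGen s i j ∈ (toPerm n).ker := toPerm_pureGen hs i j

theorem section_mul_mul_inv_mem_closure (g : Perm (Fin n)) {x : UVB n}
    (hx : x ∈ Subgroup.closure (Set.range fun p : Fin n × Fin n => pureGen s p.1 p.2)) :
    s n g * x * (s n g)⁻¹ ∈
      Subgroup.closure (Set.range fun p : Fin n × Fin n => pureGen s p.1 p.2) := by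
  induction hx using Subgroup.closure_induction with
  | mem _ h =>
    obtain ⟨⟨i, j⟩, rfl⟩ := h
    rw [← pureGen_apply hs]
    exact Subgroup.subset_closure ⟨(g i, g j), rfl⟩
  | one => simp
  | mul x y _ _ hx hy => simpa only [conj_mul] using mul_mem hx hy
  | inv x _ hx => simpa only [conj_inv] using inv_mem hx

theorem mul_section_inv_mem_closure (x : UVB n) :
    x * (s n (toPerm n x))⁻¹ ∈
      Subgroup.closure (Set.range fun p : Fin n × Fin n => pureGen s p.1 p.2) := by
  cases n with
  | zero => simp [Subsingleton.elim x 1]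
  | succ n =>
    induction x using induction_on with
    | σ k =>
      rw [toPerm_σ, section_swap hs, ← pureGen_mul_ρ hs, mul_inv_cancel_right]
      exact inv_mem (Subgroup.subset_closure ⟨(k.castSucc, k.succ), rfl⟩)
    | ρ k => simp [section_swap hs]
    | one => simp
    | mul x y hx hy =>
      convert mul_mem hx (section_mul_mul_inv_mem_closure hs (toPerm _ x) hy) using 1
      simp [mul_assoc]
    | inv x hx =>
      convert section_mul_mul_inv_mem_closure hs (toPerm _ x)⁻¹ (inv_mem hx) using 1
      simp

theorem ker_toPerm (n : ℕ) : (toPerm n).ker =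
    Subgroup.closure (Set.range fun p : Fin n × Fin n => pureGen s p.1 p.2) := by
  refine le_antisymm (fun x hx => ?_) ((Subgroup.closure_le _).2 ?_)
  · simpa [MonoidHom.mem_ker.1 hx] using mul_section_inv_mem_closure hs x
  · rintro _ ⟨p, rfl⟩
    exact pureGen_mem_ker hs p.1 p.2

theorem exists_pure_mul_section (x : UVB n) : ∃ p ∈ (toPerm n).ker, p * s n (toPerm n x) = x :=
  ⟨_, ker_toPerm hs n ▸ mul_section_inv_mem_closure hs x, inv_mul_cancel_right _ _⟩

theorem commutator_ker_le_markovKernel (n : ℕ) :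
    ⁅(toPerm n).ker, (toPerm n).ker⁆ ≤ markovKernel n := by
  rw [ker_toPerm hs, ← QuotientGroup.ker_mk' (markovKernel n), ← Subgroup.map_eq_bot_iff,
    Subgroup.map_commutator, Subgroup.commutator_eq_bot_iff_le_centralizer, MonoidHom.map_closure,
    Subgroup.centralizer_closure, Subgroup.closure_le]
  rintro _ ⟨_, ⟨⟨i, j⟩, rfl⟩, rfl⟩
  rw [SetLike.mem_coe, Subgroup.mem_centralizer_iff]
  rintro _ ⟨_, ⟨⟨k, l⟩, rfl⟩, rfl⟩
  rw [← commutatorElement_eq_one_iff_mul_comm, ← map_commutatorElement]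
  exact (QuotientGroup.eq_one_iff _).2 (commutator_pureGen_mem_markovKernel hs k l i j)

theorem markovClass_pure_mul_comm {x y : UVB n} (hx : x ∈ (toPerm n).ker)
    (hy : y ∈ (toPerm n).ker) (z : UVB n) :
    markovClass (x * (y * z)) = markovClass (y * (x * z)) := by
  have h := commutator_ker_le_markovKernel hs n (Subgroup.commutator_mem_commutator
    (inv_mem hx) (inv_mem hy))
  calc markovClass (x * (y * z))
    _ = markovClass (z * (x * y)) := by rw [← mul_assoc, markovClass_mul_comm]
    _ = markovClass (z * (y * x)) := by
      rw [← h (z * (y * x)), commutatorElement_def]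
      simp [mul_assoc]
    _ = markovClass (y * (x * z)) := by rw [markovClass_mul_comm, mul_assoc]

end PureBraids

section Destabilization

variable {s : ∀ n, Perm (Fin n) →* UVB n} (hs : ∀ n, IsPermSection n (s n))

include hs

theorem markovClass_mul_pureGen_apply (x : UVB n) (i j : Fin n) :
    markovClass (x * pureGen s (toPerm n x i) (toPerm n x j)) =
      markovClass (x * pureGen s i j) := by
  obtain ⟨p, hp, hx⟩ := exists_pure_mul_section hs x
  set π := toPerm n x
  rw [markovClass_mul_comm, ← hx, mul_assoc, (section_semiconj_pureGen hs π i j).eq]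
  exact markovClass_pure_mul_comm hs (pureGen_mem_ker hs _ _) hp _

theorem markovClass_mul_pureGen_of_swaps (x : UVB n) {i j : Fin n} (hi : toPerm n x i = j)
    (hj : toPerm n x j = i) : markovClass (x * pureGen s i j) = markovClass x := by
  obtain rfl | hij := eq_or_ne i j
  · simp
  let τ : Perm (Fin (n + 1)) := swap i.castSucc (Fin.last n)
  let z := incl n x * s (n + 1) τ
  have τ_i : τ i.castSucc = Fin.last n := swap_apply_left _ _
  have τ_last : τ (Fin.last n) = i.castSucc := swap_apply_right _ _
  have τ_j : τ j.castSucc = j.castSucc :=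
    swap_apply_of_ne_of_ne (by simpa using hij.symm) (Fin.castSucc_ne_last j)
  have z_apply (k : Fin (n + 1)) : toPerm (n + 1) z k = extendPerm n (toPerm n x) (τ k) := by
    simp [z, toPerm_incl, toPerm_section hs]
  have z_j : toPerm (n + 1) z j.castSucc = i.castSucc := by simp [z_apply, τ_j, hj]
  have z_i : toPerm (n + 1) z i.castSucc = Fin.last n := by simp [z_apply, τ_i]
  have z_last : toPerm (n + 1) z (Fin.last n) = j.castSucc := by simp [z_apply, τ_last, hi]
  have slide : incl n (x * pureGen s i j) * s (n + 1) τ =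
      z * pureGen s (Fin.last n) j.castSucc := by
    have := (section_semiconj_pureGen hs τ (Fin.last n) j.castSucc).eq
    rw [τ_last, τ_j] at this
    rw [map_mul, incl_pureGen hs, mul_assoc, ← this, mul_assoc]
  calc markovClass (x * pureGen s i j)
    _ = markovClass (z * pureGen s (Fin.last n) j.castSucc) := by
      rw [← slide]
      simpa using (markovClass_virtual_kink hs i (x * pureGen s i j) 1).symm
    _ = markovClass (z * pureGen s j.castSucc i.castSucc) := by
      rw [← markovClass_mul_pureGen_apply hs z, z_last, z_j]
    _ = markovClass (z * pureGen s i.castSucc (Fin.last n)) := by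
      rw [← markovClass_mul_pureGen_apply hs z, z_j, z_i]
    _ = markovClass x := by
      rw [mul_assoc, markovClass_negative_kink hs]

theorem exists_pure_markovClass_mul_pureGen {π : Perm (Fin (n + 1))}
    (hπ : π (Fin.last n) ≠ Fin.last n) (i j : Fin (n + 1)) :
    ∃ t ∈ (toPerm n).ker, ∀ x, toPerm (n + 1) x = π →
      markovClass (x * pureGen s i j) = markovClass (incl n t * x) := by
  have of_ne_last {k l : Fin (n + 1)} (hk : k ≠ Fin.last n) (hl : l ≠ Fin.last n) :
      ∃ t ∈ (toPerm n).ker, ∀ x, toPerm (n + 1) x = π →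
        markovClass (x * pureGen s k l) = markovClass (incl n t * x) := by
    obtain ⟨k, rfl⟩ := Fin.exists_castSucc_eq.2 hk
    obtain ⟨l, rfl⟩ := Fin.exists_castSucc_eq.2 hl
    exact ⟨_, pureGen_mem_ker hs k l, fun x _ => by rw [incl_pureGen hs, markovClass_mul_comm]⟩
  have of_apply {k l : Fin (n + 1)} (h : ∃ t ∈ (toPerm n).ker, ∀ x, toPerm (n + 1) x = π →
      markovClass (x * pureGen s (π k) (π l)) = markovClass (incl n t * x)) :
      ∃ t ∈ (toPerm n).ker, ∀ x, toPerm (n + 1) x = π →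
        markovClass (x * pureGen s k l) = markovClass (incl n t * x) := by
    obtain ⟨t, ht, h⟩ := h
    refine ⟨t, ht, fun x hx => ?_⟩
    rw [← h x hx, ← hx, markovClass_mul_pureGen_apply hs]
  -- If all of these pairs contain the last strand, then `π` interchanges `i` and `j`.
  by_cases h₀ : i ≠ Fin.last n ∧ j ≠ Fin.last n
  · exact of_ne_last h₀.1 h₀.2
  by_cases h₁ : π i ≠ Fin.last n ∧ π j ≠ Fin.last n
  · exact of_apply (of_ne_last h₁.1 h₁.2)
  by_cases h₂ : π (π i) ≠ Fin.last n ∧ π (π j) ≠ Fin.last n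
  · exact of_apply (of_apply (of_ne_last h₂.1 h₂.2))
  refine ⟨1, one_mem _, fun x hx => ?_⟩
  have hswap : π i = j ∧ π j = i := by
    have := π.injective
    grind [Function.Injective]
  subst hx
  rw [markovClass_mul_pureGen_of_swaps hs x hswap.1 hswap.2, map_one, one_mul]

theorem exists_pure_markovClass_mul {π : Perm (Fin (n + 1))} (hπ : π (Fin.last n) ≠ Fin.last n)
    {p : UVB (n + 1)} (hp : p ∈ (toPerm (n + 1)).ker) :
    ∃ t ∈ (toPerm n).ker, ∀ x, toPerm (n + 1) x = π →
      markovClass (p * x) = markovClass (incl n t * x) := by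
  have toPerm_mul {q x : UVB (n + 1)} (hq : q ∈ (toPerm (n + 1)).ker)
      (hx : toPerm (n + 1) x = π) : toPerm (n + 1) (q * x) = π := by
    rw [map_mul, MonoidHom.mem_ker.1 hq, one_mul, hx]
  rw [ker_toPerm hs] at hp
  induction hp using Subgroup.closure_induction with
  | mem _ h =>
    obtain ⟨⟨i, j⟩, rfl⟩ := h
    simpa only [markovClass_mul_comm (pureGen s i j)] using
      exists_pure_markovClass_mul_pureGen hs hπ i j
  | one => exact ⟨1, one_mem _, by simp⟩
  | mul p q _ hq ihp ihq =>
    rw [← ker_toPerm hs] at hq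
    obtain ⟨t, ht, hpt⟩ := ihp
    obtain ⟨u, hu, hqu⟩ := ihq
    refine ⟨u * t, mul_mem hu ht, fun x hx => ?_⟩
    rw [mul_assoc, hpt _ (toPerm_mul hq hx), markovClass_pure_mul_comm hs (incl_mem_ker ht) hq,
      hqu _ (toPerm_mul (incl_mem_ker ht) hx), map_mul, mul_assoc]
  | inv p hp ihp =>
    rw [← ker_toPerm hs] at hp
    obtain ⟨t, ht, hpt⟩ := ihp
    refine ⟨t⁻¹, inv_mem ht, fun x hx => ?_⟩
    have ht' := inv_mem (incl_mem_ker ht)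
    have h := hpt ((incl n t)⁻¹ * (p⁻¹ * x)) (toPerm_mul ht' (toPerm_mul (inv_mem hp) hx))
    rw [mul_inv_cancel_left] at h
    rw [← h, markovClass_pure_mul_comm hs hp ht', mul_inv_cancel_left, map_inv]

theorem exists_markovClass_eq_of_last_ne {x : UVB (n + 1)}
    (hx : toPerm (n + 1) x (Fin.last n) ≠ Fin.last n) :
    ∃ y : UVB n, markovClass x = markovClass y := by
  obtain ⟨p, hp, hpx⟩ := exists_pure_mul_section hs x
  set π := toPerm (n + 1) x
  obtain ⟨t, -, ht⟩ := exists_pure_markovClass_mul hs hx hp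
  obtain ⟨k, hk⟩ : ∃ k : Fin n, k.castSucc = π⁻¹ (Fin.last n) :=
    Fin.exists_castSucc_eq.2 fun h => hx (Perm.inv_eq_iff_eq.1 h).symm
  obtain ⟨g, hg⟩ := exists_eq_extendPerm (h := π * swap k.castSucc (Fin.last n)) (by simp [hk])
  have hπ : π = extendPerm n g * swap k.castSucc (Fin.last n) := by
    rw [← hg, mul_assoc, swap_mul_self, mul_one]
  refine ⟨t * s n g, ?_⟩
  rw [← hpx, ht _ (toPerm_section hs π), hπ, map_mul, ← incl_section hs, ← mul_assoc, ← map_mul]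
  simpa using markovClass_virtual_kink hs k (t * s n g) 1

theorem exists_pure_markovClass_eq (x : UVB (n + 1)) :
    ∃ m, ∃ p ∈ (toPerm (m + 1)).ker, markovClass x = markovClass p := by
  induction n with
  | zero => exact ⟨0, x, Subsingleton.elim (α := Perm (Fin 1)) _ _, rfl⟩
  | succ n ih =>
    by_cases hx : x ∈ (toPerm (n + 2)).ker
    · exact ⟨n + 1, x, hx, rfl⟩
    obtain ⟨a, ha⟩ : ∃ a, toPerm (n + 2) x a ≠ a := by
      contrapose! hx
      exact Equiv.ext hx
    let g := s (n + 2) (swap a (Fin.last (n + 1)))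
    have hg : toPerm (n + 2) (g * x * g⁻¹) (Fin.last (n + 1)) ≠ Fin.last (n + 1) := by
      simpa [g, toPerm_section hs, swap_apply_eq_iff] using ha
    obtain ⟨y, hy⟩ := exists_markovClass_eq_of_last_ne hs hg
    obtain ⟨m, p, hp, hyp⟩ := ih y
    exact ⟨m, p, hp, by rw [← hyp, ← hy, markovClass_conj]⟩

end Destabilization

section OrbitLabelling

variable {α X : Type*} {π : Perm α} {χ : α → X}

theorem eq_of_sameCycle (hχ : ∀ i, χ (π i) = χ i) {i j : α} (h : π.SameCycle i j) : χ i = χ j := by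
  have zpow_apply (k : ℤ) : ∀ i, χ ((π ^ k) i) = χ i := by
    induction k with
    | zero => simp
    | succ k ih => intro i; rw [zpow_add_one, Perm.mul_apply, ih, hχ]
    | pred k ih =>
      intro i; rw [zpow_sub_one, Perm.mul_apply, ih, ← hχ, Perm.coe_inv, apply_symm_apply]
  obtain ⟨k, rfl⟩ := h
  exact (zpow_apply k i).symm

/-- A labelling of the orbits of `π` by `X`: the labels of points of `α` correspond bijectively to
the orbits of `π`. -/
def IsOrbitLabelling (π : Perm α) (χ : α → X) : Prop :=
  Function.Surjective χ ∧ ∀ i j, χ i = χ j ↔ π.SameCycle i j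

namespace IsOrbitLabelling

theorem apply_eq (h : IsOrbitLabelling π χ) (i : α) : χ (π i) = χ i :=
  (h.2 _ _).2 (Perm.sameCycle_apply_left.2 (.refl π i))

theorem conj (h : IsOrbitLabelling π χ) (g : Perm α) :
    IsOrbitLabelling (g * π * g⁻¹) (χ ∘ ⇑g⁻¹) :=
  ⟨h.1.comp g⁻¹.surjective, fun i j => by rw [Perm.sameCycle_conj]; exact h.2 _ _⟩

theorem one_iff : IsOrbitLabelling 1 χ ↔ Function.Bijective χ := by
  simp only [IsOrbitLabelling, Perm.sameCycle_one, Function.Bijective, Function.Injective]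
  grind

end IsOrbitLabelling

end OrbitLabelling

section StabilizePerm

/-- The permutation of the stabilization of a braid with permutation `π`: a new point is inserted
into the orbit of the last one. -/
noncomputable def stabilizePerm (π : Perm (Fin (n + 1))) : Perm (Fin (n + 2)) :=
  extendPerm (n + 1) π * swap (Fin.last n).castSucc (Fin.last (n + 1))

theorem stabilizePerm_castSucc_castSucc (π : Perm (Fin (n + 1))) (i : Fin n) :
    stabilizePerm π i.castSucc.castSucc = (π i.castSucc).castSucc := by
  rw [stabilizePerm, Perm.mul_apply, swap_apply_of_ne_of_ne (by simp) (Fin.castSucc_ne_last _),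
    extendPerm_castSucc]

theorem stabilizePerm_castSucc_last (π : Perm (Fin (n + 1))) :
    stabilizePerm π (Fin.last n).castSucc = Fin.last (n + 1) := by
  rw [stabilizePerm, Perm.mul_apply, swap_apply_left, extendPerm_last]

theorem stabilizePerm_last (π : Perm (Fin (n + 1))) :
    stabilizePerm π (Fin.last (n + 1)) = (π (Fin.last n)).castSucc := by
  rw [stabilizePerm, Perm.mul_apply, swap_apply_right, extendPerm_castSucc]

/-- The retraction of `Fin (n + 2)` onto `Fin (n + 1)` that sends the new point of a stabilization
to the old last point. -/
def mergeLast : Fin (n + 2) → Fin (n + 1) := (Fin.last n).predAbove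

@[simp] theorem mergeLast_castSucc (i : Fin (n + 1)) : mergeLast i.castSucc = i :=
  Fin.predAbove_last_castSucc

@[simp] theorem mergeLast_last : mergeLast (Fin.last (n + 1)) = Fin.last n :=
  Fin.predAbove_right_last

theorem sameCycle_castSucc_mergeLast (π : Perm (Fin (n + 1))) (x : Fin (n + 2)) :
    (stabilizePerm π).SameCycle (mergeLast x).castSucc x := by
  cases x using Fin.lastCases with
  | last =>
    rw [mergeLast_last, ← stabilizePerm_castSucc_last π]
    exact Perm.sameCycle_apply_right.2 (.refl _ _)
  | cast i => rw [mergeLast_castSucc]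

theorem sameCycle_stabilizePerm_iff {π : Perm (Fin (n + 1))} {x y : Fin (n + 2)} :
    (stabilizePerm π).SameCycle x y ↔ π.SameCycle (mergeLast x) (mergeLast y) := by
  constructor
  · let orbit : Fin (n + 2) → Quotient (Perm.SameCycle.setoid π) := fun x => ⟦mergeLast x⟧
    intro h
    refine Quotient.exact (eq_of_sameCycle (χ := orbit) (fun x => Quotient.sound ?_) h)
    change π.SameCycle _ _
    cases x using Fin.lastCases with
    | last => simp [stabilizePerm_last, Perm.SameCycle.refl]
    | cast x =>
      cases x using Fin.lastCases with
      | last => simp [stabilizePerm_castSucc_last, Perm.SameCycle.refl]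
      | cast x => simp [stabilizePerm_castSucc_castSucc, Perm.SameCycle.refl]
  · let orbit : Fin (n + 1) → Quotient (Perm.SameCycle.setoid (stabilizePerm π)) :=
      fun i => ⟦i.castSucc⟧
    have castSucc (i : Fin (n + 1)) : (stabilizePerm π).SameCycle (π i).castSucc i.castSucc := by
      cases i using Fin.lastCases with
      | last =>
        rw [← stabilizePerm_last, ← stabilizePerm_castSucc_last π]
        simp [Perm.SameCycle.refl]
      | cast i =>
        rw [← stabilizePerm_castSucc_castSucc]
        simp [Perm.SameCycle.refl]
    intro h
    have : orbit (mergeLast x) = orbit (mergeLast y) :=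
      eq_of_sameCycle (χ := orbit) (fun i => Quotient.sound (castSucc i)) h
    exact ((sameCycle_castSucc_mergeLast π x).symm.trans (Quotient.exact this)).trans
      (sameCycle_castSucc_mergeLast π y)

theorem isOrbitLabelling_stabilizePerm_iff {X : Type*} {π : Perm (Fin (n + 1))}
    {χ : Fin (n + 2) → X} : IsOrbitLabelling (stabilizePerm π) χ ↔
      ∃ χ₀, IsOrbitLabelling π χ₀ ∧ χ = χ₀ ∘ mergeLast := by
  constructor
  · intro h
    have hχ : χ = (χ ∘ Fin.castSucc) ∘ mergeLast :=
      funext fun x => ((h.2 _ _).2 (sameCycle_castSucc_mergeLast π x)).symm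
    refine ⟨χ ∘ Fin.castSucc, ⟨(hχ ▸ h.1).of_comp, fun i j => ?_⟩, hχ⟩
    rw [Function.comp_apply, Function.comp_apply, h.2, sameCycle_stabilizePerm_iff,
      mergeLast_castSucc, mergeLast_castSucc]
  · rintro ⟨χ₀, h, rfl⟩
    refine ⟨h.1.comp fun i => ⟨_, mergeLast_castSucc i⟩, fun x y => ?_⟩
    rw [sameCycle_stabilizePerm_iff]
    exact h.2 _ _

end StabilizePerm

section NumOrbits

theorem IsOrbitLabelling.numOrbits_eq {X : Type*} [Fintype X] {π : Perm (Fin n)} {χ : Fin n → X}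
    (h : IsOrbitLabelling π χ) : numOrbits π = Fintype.card X := by
  classical
  obtain ⟨e, he⟩ := h.1.hasRightInverse
  have sameCycle_e (i : Fin n) : π.SameCycle (e (χ i)) i := (h.2 _ _).1 (he _)
  have e_eq {i : Fin n} (hi : π i = i) : e (χ i) = i := (sameCycle_e i).eq_of_right hi
  have card_fixed : (Finset.univ.filter fun A => π (e A) = e A).card =
      (Finset.univ.filter fun i => π i = i).card := by
    refine Finset.card_nbij' e χ (fun A hA => ?_) (fun i hi => ?_) (fun A _ => he A) fun i hi => ?_
    · simpa using hA
    · simpa [e_eq (Finset.mem_filter.1 hi).2] using hi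
    · exact e_eq (Finset.mem_filter.1 hi).2
  have card_moved : (Finset.univ.filter fun A => π (e A) ≠ e A).card = π.cycleType.card := by
    rw [Perm.cycleType_def, Multiset.card_map, Finset.card_val]
    refine Finset.card_nbij (fun A => π.cycleOf (e A)) (fun A hA => ?_) (fun A hA B hB hAB => ?_)
      fun c hc => ?_
    · exact Perm.cycleOf_mem_cycleFactorsFinset_iff.2 (by simpa using hA)
    · rw [← he A, ← he B, h.2]
      exact (Perm.sameCycle_iff_cycleOf_eq_of_mem_support (by simpa using hA) (by simpa using hB)).2
        hAB
    · obtain ⟨i, hi⟩ := (Perm.mem_cycleFactorsFinset_iff.1 hc).1.nonempty_support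
      have hi' : π i ≠ i := Perm.mem_support.1 (Perm.mem_cycleFactorsFinset_support_le hc hi)
      refine ⟨χ i, ?_, ?_⟩
      · simpa [(sameCycle_e i).apply_eq_self_iff] using hi'
      · exact (sameCycle_e i).cycleOf_eq.trans (Perm.cycle_is_cycleOf hi hc).symm
  rw [numOrbits, ← card_fixed, ← card_moved, Finset.card_filter_add_card_filter_not,
    Finset.card_univ]

end NumOrbits

section LinkingSum

variable {X : Type*} [DecidableEq X]

/-- The total linking number of the strands labelled `A` with the strands labelled `B`. -/
def linkingSum (χ : Fin n → X) (x : UVB n) (A B : X) : ℤ :=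
  ∑ i, ∑ j, if χ i = A ∧ χ j = B then lk x i j else 0

theorem linkingSum_one (χ : Fin n → X) : linkingSum χ 1 = 0 := by
  ext A B
  simp [linkingSum]

theorem linkingSum_mul (χ : Fin n → X) (x y : UVB n) :
    linkingSum χ (x * y) = linkingSum χ x + linkingSum (χ ∘ toPerm n x) y := by
  ext A B
  have reindex : linkingSum (χ ∘ toPerm n x) y A B = ∑ i, ∑ j,
      if χ i = A ∧ χ j = B then lk y ((toPerm n x)⁻¹ i) ((toPerm n x)⁻¹ j) else 0 :=
    Fintype.sum_equiv (toPerm n x) _ _ fun i =>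
      Fintype.sum_equiv (toPerm n x) _ _ fun j => by simp
  simp only [Pi.add_apply, reindex]
  simp only [linkingSum, lk_mul, ← Finset.sum_add_distrib]
  refine Finset.sum_congr rfl fun i _ => Finset.sum_congr rfl fun j _ => ?_
  split_ifs <;> simp

theorem linkingSum_inv (χ : Fin n → X) (x : UVB n) :
    linkingSum χ x⁻¹ = -linkingSum (χ ∘ ⇑(toPerm n x)⁻¹) x := by
  have h := linkingSum_mul χ x⁻¹ x
  rwa [inv_mul_cancel, linkingSum_one, map_inv, eq_comm, add_eq_zero_iff_eq_neg] at h

theorem linkingSum_conj {χ : Fin n → X} {x : UVB n} (hχ : χ ∘ toPerm n x = χ) (g : UVB n) :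
    linkingSum (χ ∘ ⇑(toPerm n g)⁻¹) (g * x * g⁻¹) = linkingSum χ x := by
  have hg : (χ ∘ ⇑(toPerm n g)⁻¹) ∘ toPerm n g = χ := by
    ext i
    simp
  rw [linkingSum_mul, linkingSum_mul, map_mul, Perm.coe_mul, ← Function.comp_assoc, hg, hχ,
    linkingSum_inv]
  abel

theorem linkingSum_incl (χ : Fin (n + 1) → X) (x : UVB n) :
    linkingSum χ (incl n x) = linkingSum (χ ∘ Fin.castSucc) x := by
  ext A B
  simp [linkingSum, Fin.sum_univ_castSucc, lk_incl_castSucc, lk_incl_of_eq_last]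

theorem linkingSum_ρ (χ : Fin (n + 1) → X) (k : Fin n) : linkingSum χ (ρ k) = 0 := by
  ext A B
  simp [linkingSum]

theorem linkingSum_σ {χ : Fin (n + 1) → X} {k : Fin n} (hχ : χ k.castSucc = χ k.succ) {A B : X}
    (hAB : A ≠ B) : linkingSum χ (σ k) A B = 0 := by
  refine Finset.sum_eq_zero fun i _ => Finset.sum_eq_zero fun j _ => ?_
  rw [lk_σ, ite_eq_right_iff]
  rintro ⟨rfl, rfl⟩
  exact if_neg fun ⟨hi, hj⟩ => hAB (by rw [hi, hj, hχ])

theorem linkingSum_inv_σ {χ : Fin (n + 1) → X} {k : Fin n} (hχ : χ k.castSucc = χ k.succ)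
    {A B : X} (hAB : A ≠ B) : linkingSum χ (σ k)⁻¹ A B = 0 := by
  rw [linkingSum_inv, Pi.neg_apply, Pi.neg_apply, linkingSum_σ (by simp [hχ]) hAB, neg_zero]

theorem linkingSum_apply_apply {χ : Fin n → X} (hχ : Function.Injective χ) (x : UVB n)
    (i j : Fin n) : linkingSum χ x (χ i) (χ j) = lk x i j := by
  simp [linkingSum, hχ.eq_iff, ite_and]

end LinkingSum

section LinkingMatrix

variable {X : Type*} [DecidableEq X]

/-- `M` is, off the diagonal, the matrix of linking numbers between the components of the closure of
`x`, for some labelling of these components by `X`. -/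
def HasLinkingMatrix (x : UVB (n + 1)) (M : X → X → ℤ) : Prop :=
  ∃ χ, IsOrbitLabelling (toPerm (n + 1) x) χ ∧ ∀ A B, A ≠ B → linkingSum χ x A B = M A B

variable {M : X → X → ℤ}

theorem HasLinkingMatrix.conj {x : UVB (n + 1)} (h : HasLinkingMatrix x M) (g : UVB (n + 1)) :
    HasLinkingMatrix (g * x * g⁻¹) M := by
  obtain ⟨χ, hχ, hM⟩ := h
  refine ⟨χ ∘ ⇑(toPerm _ g)⁻¹, ?_, ?_⟩
  · simpa only [map_mul, map_inv] using hχ.conj (toPerm _ g)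
  · rwa [linkingSum_conj (funext hχ.apply_eq)]

theorem hasLinkingMatrix_conj_iff {x g : UVB (n + 1)} :
    HasLinkingMatrix (g * x * g⁻¹) M ↔ HasLinkingMatrix x M :=
  ⟨fun h => by simpa [mul_assoc] using h.conj g⁻¹, fun h => h.conj g⟩

theorem hasLinkingMatrix_stabilize_iff {x : UVB (n + 1)} {u : UVB (n + 2)}
    (hu : toPerm (n + 2) u = swap (Fin.last n).castSucc (Fin.last (n + 1)))
    (hlink : ∀ χ : Fin (n + 2) → X, χ (Fin.last n).castSucc = χ (Fin.last (n + 1)) →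
      ∀ A B, A ≠ B → linkingSum χ u A B = 0) :
    HasLinkingMatrix (incl (n + 1) x * u) M ↔ HasLinkingMatrix x M := by
  have toPerm_stab : toPerm (n + 2) (incl (n + 1) x * u) = stabilizePerm (toPerm (n + 1) x) := by
    rw [map_mul, toPerm_incl, hu, stabilizePerm]
  have linkingSum_stab {χ : Fin (n + 1) → X} (hχ : IsOrbitLabelling (toPerm (n + 1) x) χ) {A B : X}
      (hAB : A ≠ B) :
      linkingSum (χ ∘ mergeLast) (incl (n + 1) x * u) A B = linkingSum χ x A B := by
    have hχ' : (χ ∘ mergeLast) ∘ Fin.castSucc = χ := by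
      ext i
      simp
    rw [linkingSum_mul, Pi.add_apply, Pi.add_apply, hlink _ _ _ _ hAB, add_zero, linkingSum_incl,
      hχ']
    simp [toPerm_incl, hχ.apply_eq]
  rw [HasLinkingMatrix, toPerm_stab]
  constructor
  · rintro ⟨χ, hχ, hM⟩
    obtain ⟨χ₀, hχ₀, rfl⟩ := isOrbitLabelling_stabilizePerm_iff.1 hχ
    exact ⟨χ₀, hχ₀, fun A B hAB => by rw [← linkingSum_stab hχ₀ hAB, hM A B hAB]⟩
  · rintro ⟨χ, hχ, hM⟩
    exact ⟨χ ∘ mergeLast, isOrbitLabelling_stabilizePerm_iff.2 ⟨χ, hχ, rfl⟩,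
      fun A B hAB => by rw [linkingSum_stab hχ hAB, hM A B hAB]⟩

/-- A braid viewed as one with at least one strand: the empty braid, which is Markov equivalent to
the trivial braid on one strand although its closure has no component, is replaced by the latter. -/
def withStrand : (Σ n, UVB n) → Σ n, UVB (n + 1)
  | ⟨0, _⟩ => ⟨0, 1⟩
  | ⟨n + 1, x⟩ => ⟨n, x⟩

theorem hasLinkingMatrix_empty (x : UVB 0) (y : UVB 1) :
    HasLinkingMatrix (withStrand ⟨0, x⟩).2 M ↔ HasLinkingMatrix (withStrand ⟨1, y⟩).2 M := by
  rw [Subsingleton.elim y 1]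
  rfl

theorem hasLinkingMatrix_iff_of_markovBase {a b : Σ n, UVB n} (h : MarkovBase a b) :
    HasLinkingMatrix (withStrand a).2 M ↔ HasLinkingMatrix (withStrand b).2 M := by
  cases h with
  | conj n x g =>
    cases n with
    | zero => rfl
    | succ n => exact hasLinkingMatrix_conj_iff.symm
  | stabPos n x =>
    cases n with
    | zero => exact hasLinkingMatrix_empty x _
    | succ n =>
      rw [sigma_succ_self]
      exact (hasLinkingMatrix_stabilize_iff (toPerm_σ _) fun χ hχ A B => linkingSum_σ hχ).symm
  | stabNeg n x =>
    cases n with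
    | zero => exact hasLinkingMatrix_empty x _
    | succ n =>
      rw [sigma_succ_self]
      exact (hasLinkingMatrix_stabilize_iff (by simp) fun χ hχ A B => linkingSum_inv_σ hχ).symm
  | stabVirt n x =>
    cases n with
    | zero => exact hasLinkingMatrix_empty x _
    | succ n =>
      rw [rho_succ_self]
      exact (hasLinkingMatrix_stabilize_iff (toPerm_ρ _) fun χ _ A B _ => by
        rw [linkingSum_ρ]; rfl).symm

theorem hasLinkingMatrix_iff_of_markov {a b : Σ n, UVB n} (h : Markov a b) :
    HasLinkingMatrix (withStrand a).2 M ↔ HasLinkingMatrix (withStrand b).2 M := by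
  induction h with
  | rel _ _ h => exact hasLinkingMatrix_iff_of_markovBase h
  | refl _ => rfl
  | symm _ _ _ ih => exact ih.symm
  | trans _ _ _ _ _ ih₁ ih₂ => exact ih₁.trans ih₂

theorem hasLinkingMatrix_iff_of_mem_ker {p : UVB (n + 1)} (hp : p ∈ (toPerm (n + 1)).ker) :
    HasLinkingMatrix p M ↔ ∃ χ : Fin (n + 1) → X, Function.Bijective χ ∧
      ∀ i j, i ≠ j → lk p i j = M (χ i) (χ j) := by
  rw [HasLinkingMatrix, MonoidHom.mem_ker.1 hp]
  refine exists_congr fun χ => ?_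
  rw [IsOrbitLabelling.one_iff]
  refine and_congr_right fun hχ => ?_
  simp only [hχ.2.forall, hχ.1.ne_iff, linkingSum_apply_apply hχ.1]

theorem hasLinkingMatrix_lk_of_markov {m : ℕ} {x : UVB (n + 1)} {p : UVB (m + 1)}
    (hp : p ∈ (toPerm (m + 1)).ker) (h : Markov ⟨n + 1, x⟩ ⟨m + 1, p⟩) :
    HasLinkingMatrix x (lk p) :=
  (hasLinkingMatrix_iff_of_markov h).2 <|
    (hasLinkingMatrix_iff_of_mem_ker hp).2 ⟨id, Function.bijective_id, fun _ _ _ => rfl⟩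

theorem numOrbits_toPerm_of_markov {m : ℕ} {x : UVB (n + 1)} {p : UVB (m + 1)}
    (hp : p ∈ (toPerm (m + 1)).ker) (h : Markov ⟨n + 1, x⟩ ⟨m + 1, p⟩) :
    numOrbits (toPerm (n + 1) x) = m + 1 := by
  obtain ⟨χ, hχ, -⟩ := hasLinkingMatrix_lk_of_markov hp h
  rw [hχ.numOrbits_eq, Fintype.card_fin]

end LinkingMatrix

section PureAbelianization

theorem lk_mul_of_mem_ker {x : UVB n} (hx : x ∈ (toPerm n).ker) (y : UVB n) (i j : Fin n) :
    lk (x * y) i j = lk x i j + lk y i j := by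
  rw [lk_mul, MonoidHom.mem_ker.1 hx]
  rfl

theorem lk_inv_of_mem_ker {x : UVB n} (hx : x ∈ (toPerm n).ker) (i j : Fin n) :
    lk x⁻¹ i j = -lk x i j := by
  rw [lk_inv, MonoidHom.mem_ker.1 hx]
  rfl

variable {s : ∀ n, Perm (Fin n) →* UVB n} (hs : ∀ n, IsPermSection n (s n))

include hs

theorem lk_section_conj (x : UVB n) (g : Perm (Fin n)) (i j : Fin n) :
    lk (s n g * x * (s n g)⁻¹) i j = lk x (g⁻¹ i) (g⁻¹ j) := by
  rw [← map_inv, lk_mul, lk_mul, lk_section hs, lk_section hs, toPerm_section hs, zero_add,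
    add_zero]

theorem map_eq_prod_zpow_lk {A : Type*} [CommGroup A] (f : (toPerm n).ker →* A) {x : UVB n}
    (hx : x ∈ (toPerm n).ker) : f ⟨x, hx⟩ =
      ∏ p : Fin n × Fin n, f ⟨pureGen s p.1 p.2, pureGen_mem_ker hs _ _⟩ ^ lk x p.1 p.2 := by
  have f_one (h : 1 ∈ (toPerm n).ker) : f ⟨1, h⟩ = 1 := map_one f
  have key {x : UVB n} (h : x ∈ Subgroup.closure
      (Set.range fun p : Fin n × Fin n => pureGen s p.1 p.2)) : ∀ hx, f ⟨x, hx⟩ =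
        ∏ p : Fin n × Fin n, f ⟨pureGen s p.1 p.2, pureGen_mem_ker hs _ _⟩ ^ lk x p.1 p.2 := by
    induction h using Subgroup.closure_induction with
    | mem _ h =>
      obtain ⟨⟨i, j⟩, rfl⟩ := h
      intro _
      obtain rfl | hij := eq_or_ne i j
      · simp [f_one]
      rw [Finset.prod_eq_single (i, j)]
      · simp [lk_pureGen hs hij]
      · rintro ⟨k, l⟩ - hkl
        rw [lk_pureGen hs hij, if_neg (by simpa using hkl), zpow_zero]
      · simp
    | one =>
      simp [f_one]
    | mul x y hx hy ihx ihy =>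
      rw [← ker_toPerm hs] at hx hy
      intro _
      simp only [lk_mul_of_mem_ker hx, zpow_add, Finset.prod_mul_distrib, ← ihx hx, ← ihy hy,
        ← map_mul]
      rfl
    | inv x hx ihx =>
      rw [← ker_toPerm hs] at hx
      intro _
      simp only [lk_inv_of_mem_ker hx, zpow_neg, Finset.prod_inv_distrib, ← ihx hx, ← map_inv]
      rfl
  exact key (ker_toPerm hs n ▸ hx) hx

theorem mul_inv_mem_commutator_of_lk_eq {x y : UVB n} (hx : x ∈ (toPerm n).ker)
    (hy : y ∈ (toPerm n).ker) (h : ∀ i j, i ≠ j → lk x i j = lk y i j) :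
    x * y⁻¹ ∈ ⁅(toPerm n).ker, (toPerm n).ker⁆ := by
  have hxy : Abelianization.of (⟨x, hx⟩ : (toPerm n).ker) = Abelianization.of ⟨y, hy⟩ := by
    rw [map_eq_prod_zpow_lk hs, map_eq_prod_zpow_lk hs _ hy]
    refine Finset.prod_congr rfl fun ⟨i, j⟩ _ => ?_
    obtain rfl | hij := eq_or_ne i j
    · have : (⟨pureGen s i i, pureGen_mem_ker hs i i⟩ : (toPerm n).ker) = 1 :=
        Subtype.ext (pureGen_self i)
      simp only [this, map_one, one_zpow]
    · rw [h i j hij]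
  rw [← Subgroup.map_subtype_commutator]
  refine ⟨⟨x, hx⟩ * ⟨y, hy⟩⁻¹, ?_, rfl⟩
  rw [← Abelianization.ker_of, SetLike.mem_coe, MonoidHom.mem_ker, map_mul, map_inv, hxy,
    mul_inv_cancel]

end PureAbelianization

section Classification

variable {s : ∀ n, Perm (Fin n) →* UVB n} (hs : ∀ n, IsPermSection n (s n))

include hs

theorem markov_iff_exists_conj_mem_commutator {p q : UVB (n + 1)} (hp : p ∈ (toPerm (n + 1)).ker)
    (hq : q ∈ (toPerm (n + 1)).ker) : Markov ⟨n + 1, p⟩ ⟨n + 1, q⟩ ↔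
      ∃ π, s (n + 1) π * p * (s (n + 1) π)⁻¹ * q⁻¹ ∈
        ⁅(toPerm (n + 1)).ker, (toPerm (n + 1)).ker⁆ := by
  constructor
  · intro h
    obtain ⟨χ, hχ, hpq⟩ := (hasLinkingMatrix_iff_of_mem_ker hq).1
      (hasLinkingMatrix_lk_of_markov hp h.symm)
    refine ⟨(Equiv.ofBijective χ hχ)⁻¹, mul_inv_mem_commutator_of_lk_eq hs
      ((toPerm (n + 1)).normal_ker.conj_mem p hp _) hq fun i j hij => ?_⟩
    rw [lk_section_conj hs, hpq i j hij, inv_inv]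
    rfl
  · rintro ⟨π, h⟩
    set p' := s (n + 1) π * p * (s (n + 1) π)⁻¹
    refine markovClass_eq_iff.1 ?_
    calc markovClass p
      _ = markovClass p' := (markovClass_conj _ _).symm
      _ = markovClass (q * (p' * q⁻¹)) := by rw [markovClass_mul_comm q, inv_mul_cancel_right]
      _ = markovClass q := commutator_ker_le_markovKernel hs _ h q

theorem markov_iff_of_mem_ker {m : ℕ} {p : UVB (n + 1)} {q : UVB (m + 1)}
    (hp : p ∈ (toPerm (n + 1)).ker) (hq : q ∈ (toPerm (m + 1)).ker) :
    Markov ⟨n + 1, p⟩ ⟨m + 1, q⟩ ↔ ∃ (h : m + 1 = n + 1) (π : Perm (Fin (n + 1))),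
      s (n + 1) π * p * (s (n + 1) π)⁻¹ * (cast (congrArg UVB h) q)⁻¹ ∈
        ⁅(toPerm (n + 1)).ker, (toPerm (n + 1)).ker⁆ := by
  obtain rfl | hmn := eq_or_ne m n
  · simpa using markov_iff_exists_conj_mem_commutator hs hp hq
  · refine iff_of_false (fun h => hmn ?_) fun ⟨h, _⟩ => hmn (Nat.succ_injective h)
    exact Nat.succ_injective <| (numOrbits_toPerm_of_markov hq (.refl _)).symm.trans
      (numOrbits_toPerm_of_markov hp h.symm)

theorem exists_pure_markov (a : Σ n, UVB n) :
    ∃ m, ∃ p : UVB (m + 1), p ∈ (toPerm (m + 1)).ker ∧ Markov a ⟨m + 1, p⟩ := by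
  match a with
  | ⟨n + 1, x⟩ =>
    obtain ⟨m, p, hp, hxp⟩ := exists_pure_markovClass_eq hs x
    exact ⟨m, p, hp, markovClass_eq_iff.1 hxp⟩
  | ⟨0, x⟩ =>
    exact ⟨0, _, Subsingleton.elim (α := Perm (Fin 1)) _ _, .rel _ _ (.stabPos 0 x)⟩

end Classification

end UVB

/-- the complete invariant ϱ*.  There is a map ϱ* sending each
braid `α ∈ UVB n` (n ≥ 2) to a pure braid `ϱ*(α) ∈ UVP m`, `m` being the number of
orbits of ι(α), such that α ∼ ϱ*(α), and two braids α, β are fused Markov equivalent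
iff ϱ*(α) and ϱ*(β) lie in the same group `UVP m` and are conjugate by an element of
`S_m ≤ UVB m` modulo `[UVP m, UVP m]`. -/
theorem statement11 (ι : ∀ n, UVB n →* Equiv.Perm (Fin n)) (hι : ∀ n, IsIota n (ι n))
    (s : ∀ n, Equiv.Perm (Fin n) →* UVB n) (hs : ∀ n, IsPermSection n (s n)) :
    ∃ f : (Σ n, UVB n) → (Σ n, UVB n),
      (∀ n, 2 ≤ n → ∀ α : UVB n,
        (f ⟨n, α⟩).1 = numOrbits (ι n α) ∧
        (f ⟨n, α⟩).2 ∈ (ι (f ⟨n, α⟩).1).ker ∧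
        Markov ⟨n, α⟩ (f ⟨n, α⟩)) ∧
      (∀ n m, 2 ≤ n → 2 ≤ m → ∀ (α : UVB n) (β : UVB m),
        Markov ⟨n, α⟩ ⟨m, β⟩ ↔
          ∃ (h : (f ⟨m, β⟩).1 = (f ⟨n, α⟩).1) (π : Equiv.Perm (Fin (f ⟨n, α⟩).1)),
            s (f ⟨n, α⟩).1 π * (f ⟨n, α⟩).2 * (s (f ⟨n, α⟩).1 π)⁻¹ *
                (cast (congrArg UVB h) (f ⟨m, β⟩).2)⁻¹ ∈
              ⁅(ι (f ⟨n, α⟩).1).ker, (ι (f ⟨n, α⟩).1).ker⁆) := by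
  obtain rfl : ι = UVB.toPerm := funext fun n => UVB.eq_toPerm (hι n)
  choose m p p_mem p_markov using UVB.exists_pure_markov hs
  refine ⟨fun a => ⟨m a + 1, p a⟩, fun n hn α => ?_, fun n k _ _ α β => ?_⟩
  · obtain ⟨n, rfl⟩ := Nat.exists_eq_add_one.2 (Nat.zero_lt_of_lt hn)
    exact ⟨(UVB.numOrbits_toPerm_of_markov (p_mem _) (p_markov _)).symm, p_mem _, p_markov _⟩
  · rw [← UVB.markov_iff_of_mem_ker hs (p_mem _) (p_mem _)]
    exact ⟨fun h => ((p_markov ⟨n, α⟩).symm.trans _ _ _ h).trans _ _ _ (p_markov ⟨k, β⟩),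
      fun h => ((p_markov ⟨n, α⟩).trans _ _ _ h).trans _ _ _ (p_markov ⟨k, β⟩).symm⟩
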